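/- arXiv:1210.1669 — 3 statements merged into one kernel-verified Lean document; each statement's English description precedes it below -/
import Mathlib

section
/- For every a ∈ I = {1,…,r}, the quantum dimension solution (z^{(a)}_m) of type D_r satisfies: (1) positivity: z^{(a)}_m > 0 for 0 ≤ m ≤ k; (2) symmetry: z^{(a)}_m = z^{(a)}_{k−m} for 1 ≤ m ≤ k−1; (3) unit boundary condition: z^{(a)}_k = 1; (4) unimodality: z^{(a)}_{m−1} < z^{(a)}_m for 1 ≤ m ≤ ⌊k/2⌋. -/
/-- Orthogonal coordinates `u_i(λ)` of `λ + ρ` for the weight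
`λ = λ_1 ω_1 + ⋯ + λ_r ω_r` of `D_r` given in fundamental-weight coordinates. -/
noncomputable def uCoord (r : ℕ) (lam : ℕ → ℤ) (i : ℕ) : ℝ :=
  if i = r then ((lam r : ℝ) - (lam (r - 1) : ℝ)) / 2
  else (∑ j ∈ Finset.Icc i (r - 2), (lam j : ℝ))
      + ((lam (r - 1) : ℝ) + (lam r : ℝ)) / 2 + ((r : ℝ) - (i : ℝ))

/-- The level-`k` quantum dimension of the weight `λ` of `D_r`
(`h = 2r - 2` is the Coxeter number), given by the product over the
positive roots `e_i - e_j`, `e_i + e_j` (`1 ≤ i < j ≤ r`). -/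
noncomputable def qdimD (r k : ℕ) (lam : ℕ → ℤ) : ℝ :=
  ∏ p ∈ (Finset.Icc 1 r ×ˢ Finset.Icc 1 r).filter (fun p => p.1 < p.2),
    (Real.sin (Real.pi * (uCoord r lam p.1 - uCoord r lam p.2) / (2 * (r : ℝ) - 2 + (k : ℝ)))
      * Real.sin (Real.pi * (uCoord r lam p.1 + uCoord r lam p.2) / (2 * (r : ℝ) - 2 + (k : ℝ))))
    / (Real.sin (Real.pi * ((p.2 : ℝ) - (p.1 : ℝ)) / (2 * (r : ℝ) - 2 + (k : ℝ)))
      * Real.sin (Real.pi * (2 * (r : ℝ) - (p.1 : ℝ) - (p.2 : ℝ)) / (2 * (r : ℝ) - 2 + (k : ℝ))))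

/-- The quantum dimension solution `z^{(a)}_m` of the `Q`-system of type `D_r`:
the specialization `Q^{(a)}_m(ρ/(h+k))` of the classical characters of the
Kirillov–Reshetikhin modules of type `D_r`. -/
noncomputable def zD (r k a m : ℕ) : ℝ :=
  if a = r - 1 ∨ a = r then
    qdimD r k (fun j => if j = a then (m : ℤ) else 0)
  else if a % 2 = 1 then
    ∑ c ∈ (Fintype.piFinset (fun _ : Fin ((a + 1) / 2) => Finset.range (m + 1))).filter
        (fun c => ∑ i, c i = m),
      qdimD r k (fun j => ∑ i : Fin ((a + 1) / 2), if j = 2 * (i : ℕ) + 1 then (c i : ℤ) else 0)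
  else
    ∑ c ∈ (Fintype.piFinset (fun _ : Fin (a / 2) => Finset.range (m + 1))).filter
        (fun c => ∑ i, c i ≤ m),
      qdimD r k (fun j => ∑ i : Fin (a / 2), if j = 2 * (i : ℕ) + 2 then (c i : ℤ) else 0)

/-!
The two sines attached to the roots `e_i - e_j` and `e_i + e_j` multiply to half the difference of
two of the points `cos (2 π p / N)`, where `N = 2 r - 2 + k`. If `λ` vanishes at the spin nodes,
`D(λ)` is therefore a ratio of Vandermonde products of such points, the points in the numerator
being indexed by the coordinates of `λ + ρ`.

For `a ≤ r - 2` these coordinates consist of all `p < r - a`, of pairs `p, p + 1` with `p ≥ r - a`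
and, for odd `a`, of one top coordinate that depends only on `m`. Hence `z^{(a)}_m` is a sum, over
the sets of pair positions `p` in an interval, of weights which are symmetric in the pairs and
alternating in the two members of each pair; in particular overlapping pairs do not contribute. The
reflection `p ↦ N - p` fixes the points and exchanges the members of a pair, so it changes the sign
of the weight. The positions in the part of the interval stable under the reflection cancel out,
and what is left is the same for `m` and `k - m`. Up to `k / 2` all points involved lie where the
cosine decreases, and the sums grow term by term.

For a spin node, `z^{(a)}_m` is a product of sines over the roots `e_i + e_j`. Pairing each root
with its image under `i ↦ r + 1 - i` gives the symmetry directly, and the growth after squaring,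
from `sin (a + d) sin (b + d) - sin a sin b = sin d sin (a + b + d)`.

In all cases positivity follows from growth and symmetry.
-/

namespace QuantumDimD

open Finset

section PairProd

variable {α M : Type*} [LinearOrder α] [CommMonoid M]

/-- The product of `f x y` over the pairs `y < x` of elements of `S`, generalizing the Vandermonde
product. -/
def pairProd (f : α → α → M) (S : Finset α) : M :=
  ∏ x ∈ S, ∏ y ∈ S with y < x, f x y

lemma pairProd_empty (f : α → α → M) : pairProd f ∅ = 1 :=
  prod_empty

lemma pairProd_insert (f : α → α → M) {S : Finset α} {x : α} (hx : x ∉ S) :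
    pairProd f (insert x S) = pairProd f S * ∏ y ∈ S, f (max x y) (min x y) := by
  simp only [pairProd, prod_filter, prod_insert hx, lt_irrefl, if_false, one_mul]
  rw [mul_comm, prod_mul_distrib, mul_comm (∏ y ∈ S, _), mul_assoc, ← prod_mul_distrib]
  congr 1
  refine prod_congr rfl fun y hy => ?_
  rcases lt_or_gt_of_ne (ne_of_mem_of_not_mem hy hx) with h | h
  · simp [h, h.le, h.le.not_gt]
  · simp [h, h.le, h.le.not_gt]

lemma pairProd_insert_of_forall_lt (f : α → α → M) {S : Finset α} {x : α} (h : ∀ y ∈ S, y < x) :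
    pairProd f (insert x S) = pairProd f S * ∏ y ∈ S, f x y := by
  rw [pairProd_insert f fun hx => (h x hx).false]
  congr 1
  exact prod_congr rfl fun y hy => by rw [max_eq_left (h y hy).le, min_eq_right (h y hy).le]

lemma pairProd_insert_of_comm {f : α → α → M} (hf : ∀ x y, f x y = f y x) {S : Finset α} {x : α}
    (hx : x ∉ S) : pairProd f (insert x S) = pairProd f S * ∏ y ∈ S, f x y := by
  rw [pairProd_insert f hx]
  congr 1
  refine prod_congr rfl fun y _ => ?_
  rcases le_total x y with h | h
  · rw [max_eq_right h, min_eq_left h, hf]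
  · rw [max_eq_left h, min_eq_right h]

lemma pairProd_image {ι : Type*} [LinearOrder ι] (f : α → α → M) {u : ι → α} {I : Finset ι}
    (hu : StrictAntiOn u I) :
    pairProd f (I.image u) = ∏ p ∈ (I ×ˢ I).filter (fun p => p.1 < p.2), f (u p.1) (u p.2) := by
  simp only [pairProd, prod_filter]
  rw [prod_product, prod_image hu.injOn]
  refine prod_congr rfl fun i hi => ?_
  rw [prod_image hu.injOn]
  exact prod_congr rfl fun j hj => by simp only [hu.lt_iff_gt hj hi]

end PairProd

section PowersetCard

variable {α E : Type*} [DecidableEq α] [AddCommGroup E] {F : Finset α → E} {A : Finset α}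

lemma sum_powersetCard_succ_insert {q : α} (hq : q ∉ A) (F : Finset α → E) (s : ℕ) :
    ∑ S ∈ powersetCard (s + 1) (insert q A), F S
      = ∑ S ∈ powersetCard (s + 1) A, F S + ∑ S ∈ powersetCard s A, F (insert q S) := by
  have hmem : ∀ n, ∀ S ∈ powersetCard n A, q ∉ S := fun n S hS h =>
    hq ((mem_powersetCard.1 hS).1 h)
  rw [powersetCard_succ_insert hq, sum_union, sum_image]
  · intro S hS T hT hST
    rw [← erase_insert (hmem _ S hS), hST, erase_insert (hmem _ T hT)]
  · refine disjoint_left.2 fun S hS hS' => ?_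
    obtain ⟨T, -, rfl⟩ := mem_image.1 hS'
    exact hmem _ _ hS (mem_insert_self _ _)

lemma sum_powersetCard_insert_of_eq_zero {q : α} (hq : q ∉ A)
    (hF : ∀ S ⊆ A, F (insert q S) = 0) (s : ℕ) :
    ∑ S ∈ powersetCard s (insert q A), F S = ∑ S ∈ powersetCard s A, F S := by
  cases s with
  | zero => simp only [powersetCard_zero]
  | succ s =>
    rw [sum_powersetCard_succ_insert hq,
      sum_eq_zero fun S hS => hF S (mem_powersetCard.1 hS).1, add_zero]

lemma sum_powersetCard_insert_insert_of_neg {q q' : α} (hqq' : q ≠ q') (hq : q ∉ A) (hq' : q' ∉ A)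
    (hodd : ∀ S ⊆ A, F (insert q' S) = -F (insert q S))
    (hzero : ∀ S ⊆ A, F (insert q (insert q' S)) = 0) (s : ℕ) :
    ∑ S ∈ powersetCard s (insert q (insert q' A)), F S = ∑ S ∈ powersetCard s A, F S := by
  cases s with
  | zero => simp only [powersetCard_zero]
  | succ s =>
    have hcancel : ∑ S ∈ powersetCard s A, F (insert q' S)
        = -∑ S ∈ powersetCard s A, F (insert q S) := by
      rw [← sum_neg_distrib]
      exact sum_congr rfl fun S hS => hodd S (mem_powersetCard.1 hS).1
    rw [sum_powersetCard_succ_insert (by simp [hqq', hq]), sum_powersetCard_succ_insert hq',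
      sum_powersetCard_insert_of_eq_zero (F := fun S => F (insert q S)) hq' hzero, hcancel,
      neg_add_cancel_right]

theorem sum_powersetCard_union_of_odd [IsAddTorsionFree E] (σ : α → α) {B : Finset α}
    (hmaps : ∀ q ∈ B, σ q ∈ B) (hinv : ∀ q ∈ B, σ (σ q) = q) (hAB : Disjoint A B)
    (hodd : ∀ q ∈ B, ∀ S, q ∉ S → σ q ∉ S → F (insert (σ q) S) = -F (insert q S))
    (hzero : ∀ q ∈ B, q ≠ σ q → ∀ S, q ∉ S → F (insert q (insert (σ q) S)) = 0) (s : ℕ) :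
    ∑ S ∈ powersetCard s (A ∪ B), F S = ∑ S ∈ powersetCard s A, F S := by
  induction B using Finset.strongInduction with
  | H B ih =>
  obtain rfl | ⟨q, hq⟩ := B.eq_empty_or_nonempty
  · rw [union_empty]
  set C := (B.erase q).erase (σ q) with hC
  have hCB : C ⊂ B := (erase_subset _ _).trans_ssubset (erase_ssubset hq)
  have hC_iff : ∀ p, p ∈ C ↔ p ≠ σ q ∧ p ≠ q ∧ p ∈ B := fun p => by rw [hC, mem_erase, mem_erase]
  have hmapsC : ∀ p ∈ C, σ p ∈ C := by
    intro p hp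
    obtain ⟨hpσ, hpq, hpB⟩ := (hC_iff p).1 hp
    refine (hC_iff _).2 ⟨fun h => hpq ?_, fun h => hpσ ?_, hmaps p hpB⟩
    · rw [← hinv p hpB, h, hinv q hq]
    · rw [← h, hinv p hpB]
  have hB : B = insert q (insert (σ q) C) := by
    ext p
    simp only [mem_insert, hC_iff]
    have hσq := hmaps q hq
    grind
  have hnotMem : ∀ p ∈ B, p ∉ C → p ∉ A ∪ C := fun p hpB hpC h =>
    (mem_union.1 h).elim (fun hpA => disjoint_left.1 hAB hpA hpB) hpC
  have hqAC : q ∉ A ∪ C := hnotMem q hq fun h => ((hC_iff q).1 h).2.1 rfl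
  have hσAC : σ q ∉ A ∪ C := hnotMem _ (hmaps q hq) fun h => ((hC_iff _).1 h).1 rfl
  rw [← ih C hCB hmapsC (fun p hp => hinv p (hCB.1 hp)) (hAB.mono_right hCB.1)
    (fun p hp => hodd p (hCB.1 hp)) (fun p hp => hzero p (hCB.1 hp)), hB, union_insert,
    union_insert]
  by_cases hfix : q = σ q
  · rw [← hfix] at hσAC ⊢
    rw [insert_idem]
    refine sum_powersetCard_insert_of_eq_zero hqAC (fun S hS => ?_) s
    have hqS : q ∉ S := fun h => hqAC (hS h)
    have hneg := hodd q hq S hqS (hfix ▸ hqS)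
    rwa [← hfix, self_eq_neg] at hneg
  · exact sum_powersetCard_insert_insert_of_neg hfix hqAC hσAC
      (fun S hS => hodd q hq S (fun h => hqAC (hS h)) (fun h => hσAC (hS h)))
      (fun S hS => hzero q hq hfix S fun h => hqAC (hS h)) s

end PowersetCard

section SparseSets

variable {E : Type*} [AddCommGroup E] {F : Finset ℕ → E}

lemma sum_powersetCard_succ_Ico (F : Finset ℕ → E) (s a b : ℕ) :
    ∑ S ∈ powersetCard (s + 1) (Ico a b), F S
      = ∑ t ∈ Ico a b, ∑ S ∈ powersetCard s (Ico a t), F (insert t S) := by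
  have hempty : powersetCard (s + 1) (∅ : Finset ℕ) = ∅ := powersetCard_eq_empty.2 (by simp)
  rcases le_total b a with hab | hab
  · simp [Ico_eq_empty_of_le hab, hempty]
  induction b, hab using Nat.le_induction with
  | base => simp [hempty]
  | succ b hab ih =>
    rw [← insert_Ico_right_eq_Ico_add_one hab, sum_powersetCard_succ_insert (by simp), ih,
      sum_insert (by simp), add_comm]

lemma sum_powersetCard_Ico_pred {a b : ℕ} (hF : ∀ S, ∀ p ∈ S, p + 1 = b → F S = 0) (s : ℕ) :
    ∑ S ∈ powersetCard s (Ico a (b - 1)), F S = ∑ S ∈ powersetCard s (Ico a b), F S := by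
  rcases le_or_gt b a with hba | hab
  · rw [Ico_eq_empty_of_le hba, Ico_eq_empty_of_le (by omega)]
  · rw [← insert_Ico_sub_one_right_eq_Ico hab, sum_powersetCard_insert_of_eq_zero (by simp)]
    exact fun S _ => hF _ (b - 1) (mem_insert_self _ _) (by omega)

lemma exists_succ_mem_of_subset_Ico {a s : ℕ} {S : Finset ℕ} (hS : S ⊆ Ico a (a + 2 * s))
    (hcard : s < #S) : ∃ p ∈ S, p + 1 ∈ S := by
  obtain ⟨x, hx, y, hy, hne, hxy⟩ := exists_ne_map_eq_of_card_lt_of_maps_to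
    (s := S) (t := range s) (f := fun p => (p - a) / 2) (by rwa [card_range])
    (fun p hp => by have := mem_Ico.1 (hS hp); simp only [coe_range, Set.mem_Iio]; omega)
  have := mem_Ico.1 (hS hx)
  have := mem_Ico.1 (hS hy)
  rcases Nat.lt_or_gt_of_ne hne with h | h
  · exact ⟨x, hx, by convert hy using 1; omega⟩
  · exact ⟨y, hy, by convert hx using 1; omega⟩

lemma sum_powersetCard_insert_eq_zero (hF : ∀ S p, p ∈ S → p + 1 ∈ S → F S = 0) {a s t : ℕ}
    (hat : a ≤ t) (ht : t < a + 2 * s) : ∑ S ∈ powersetCard s (Ico a t), F (insert t S) = 0 := by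
  refine sum_eq_zero fun S hS => ?_
  obtain ⟨hSt, hcard⟩ := mem_powersetCard.1 hS
  have htS : t ∉ S := fun h => by simpa using hSt h
  obtain ⟨p, hp, hp'⟩ := exists_succ_mem_of_subset_Ico (s := s)
    (insert_subset (mem_Ico.2 ⟨hat, ht⟩) (hSt.trans (Ico_subset_Ico_right ht.le)))
    (by rw [card_insert_of_notMem htS, hcard]; exact s.lt_succ_self)
  exact hF _ p hp hp'

end SparseSets

section Tuples

/-- The tuples of `s` natural numbers with sum at most `m`. -/
def tuplesLE (s m : ℕ) : Finset (Fin s → ℕ) :=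
  (Fintype.piFinset fun _ => range (m + 1)).filter fun c => ∑ i, c i ≤ m

variable {s m : ℕ} {c : Fin s → ℕ}

lemma mem_piFinset_range_of_sum_le (h : ∑ i, c i ≤ m) :
    c ∈ Fintype.piFinset fun _ => range (m + 1) :=
  Fintype.mem_piFinset.2 fun i => mem_range.2 <| Nat.lt_succ_of_le <|
    (single_le_sum (fun _ _ => Nat.zero_le _) (mem_univ i)).trans h

lemma mem_tuplesLE : c ∈ tuplesLE s m ↔ ∑ i, c i ≤ m := by
  rw [tuplesLE, mem_filter, and_iff_right_iff_imp]
  exact mem_piFinset_range_of_sum_le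

lemma filter_sum_eq_antidiagonalTuple (s m : ℕ) :
    (Fintype.piFinset fun _ : Fin s => range (m + 1)).filter (fun c => ∑ i, c i = m)
      = Nat.antidiagonalTuple s m := by
  ext c
  rw [mem_filter, Nat.mem_antidiagonalTuple, and_iff_right_iff_imp]
  exact fun h => mem_piFinset_range_of_sum_le h.le

lemma zero_mem_tuplesLE (s m : ℕ) : (0 : Fin s → ℕ) ∈ tuplesLE s m := by
  simp [mem_tuplesLE]

lemma tuplesLE_zero (s : ℕ) : tuplesLE s 0 = {0} := by
  ext c
  simp [mem_tuplesLE, funext_iff]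

lemma tuplesLE_mono (s : ℕ) : Monotone (tuplesLE s) :=
  fun _ _ h _ hc => mem_tuplesLE.2 ((mem_tuplesLE.1 hc).trans h)

variable {E : Type*} [AddCommMonoid E]

lemma sum_tuplesLE (s m : ℕ) (f : (Fin s → ℕ) → E) :
    ∑ c ∈ tuplesLE s m, f c = ∑ j ∈ range (m + 1), ∑ c ∈ Nat.antidiagonalTuple s j, f c := by
  rw [← sum_fiberwise_of_maps_to (g := fun c : Fin s → ℕ => ∑ i, c i)
    (fun c hc => mem_range.2 (Nat.lt_succ_of_le (mem_tuplesLE.1 hc)))]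
  refine sum_congr rfl fun j hj => sum_congr ?_ fun _ _ => rfl
  ext c
  rw [mem_filter, mem_tuplesLE, Nat.mem_antidiagonalTuple, and_iff_right_iff_imp]
  exact fun h => h.trans_le (Nat.le_of_lt_succ (mem_range.1 hj))

lemma sum_antidiagonalTuple_tail (s m : ℕ) (f : (Fin s → ℕ) → E) :
    ∑ c ∈ Nat.antidiagonalTuple (s + 1) m, f (Fin.tail c) = ∑ c ∈ tuplesLE s m, f c := by
  refine sum_nbij' Fin.tail (fun c => Fin.cons (m - ∑ i, c i) c) ?_ ?_ ?_ ?_ fun _ _ => rfl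
  · intro c hc
    rw [Nat.mem_antidiagonalTuple, Fin.sum_univ_succ] at hc
    exact mem_tuplesLE.2 (Nat.le_of_add_left_le hc.le)
  · intro c hc
    simp only [Nat.mem_antidiagonalTuple, Fin.sum_univ_succ, Fin.cons_zero, Fin.cons_succ]
    exact Nat.sub_add_cancel (mem_tuplesLE.1 hc)
  · intro c hc
    rw [Nat.mem_antidiagonalTuple, Fin.sum_univ_succ] at hc
    have hhead : m - ∑ i, Fin.tail c i = c 0 := Nat.sub_eq_of_eq_add hc.symm
    rw [hhead, Fin.cons_self_tail]
  · exact fun c _ => Fin.tail_cons _ _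

end Tuples

section PairCoords

/-- The lower coordinates `p` of the pairs of consecutive coordinates `p, p + 1` attached to a tuple
of multiplicities, when `lo` further coordinates lie below all the pairs. -/
def pairBottoms (lo : ℕ) : {s : ℕ} → (Fin s → ℕ) → Finset ℕ
  | 0, _ => ∅
  | s + 1, c => insert (lo + 2 * s + ∑ i, c i) (pairBottoms lo (Fin.tail c))

/-- The coordinates of `λ + ρ` for a weight `λ` supported on every second node of the diagram, with
multiplicities `c`: the numbers below `lo`, together with pairs of consecutive numbers. -/
def pairCoords (lo : ℕ) : {s : ℕ} → (Fin s → ℕ) → Finset ℕ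
  | 0, _ => range lo
  | s + 1, c => insert (lo + 2 * s + ∑ i, c i + 1)
      (insert (lo + 2 * s + ∑ i, c i) (pairCoords lo (Fin.tail c)))

variable {lo s m p : ℕ}

lemma lt_add_sum_of_mem_pairCoords {c : Fin s → ℕ} (h : p ∈ pairCoords lo c) :
    p < lo + 2 * s + ∑ i, c i := by
  induction s with
  | zero => simpa [pairCoords] using h
  | succ s ih =>
    have hsum : ∑ i, c i = c 0 + ∑ i, Fin.tail c i := Fin.sum_univ_succ c
    rw [pairCoords, mem_insert, mem_insert] at h
    rcases h with rfl | rfl | h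
    · omega
    · omega
    · have := ih h
      omega

lemma lt_of_mem_pairCoords {c : Fin s → ℕ} (hc : c ∈ tuplesLE s m) (h : p ∈ pairCoords lo c) :
    p < lo + 2 * s + m :=
  (lt_add_sum_of_mem_pairCoords h).trans_le (Nat.add_le_add_left (mem_tuplesLE.1 hc) _)

lemma lt_of_mem_pairCoords_tail {c : Fin (s + 1) → ℕ} (h : p ∈ pairCoords lo (Fin.tail c)) :
    p < lo + 2 * s + ∑ i, c i := by
  have hsum : ∑ i, c i = c 0 + ∑ i, Fin.tail c i := Fin.sum_univ_succ c
  have := lt_add_sum_of_mem_pairCoords h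
  omega

lemma pairBottoms_subset_pairCoords (lo : ℕ) (c : Fin s → ℕ) :
    pairBottoms lo c ⊆ pairCoords lo c := by
  induction s with
  | zero => exact empty_subset _
  | succ s ih => exact (insert_subset_insert _ (ih _)).trans (subset_insert _ _)

lemma range_subset_pairCoords (lo : ℕ) (c : Fin s → ℕ) : range lo ⊆ pairCoords lo c := by
  induction s with
  | zero => exact Subset.rfl
  | succ s ih => exact (ih _).trans ((subset_insert _ _).trans (subset_insert _ _))

lemma pairCoords_zero (lo s : ℕ) : pairCoords lo (0 : Fin s → ℕ) = range (lo + 2 * s) := by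
  induction s with
  | zero => rfl
  | succ s ih =>
    have htail : Fin.tail (0 : Fin (s + 1) → ℕ) = 0 := rfl
    rw [pairCoords, htail, ih]
    simp only [Pi.zero_apply, sum_const_zero, add_zero]
    rw [← range_add_one, ← range_add_one]
    rfl

theorem sum_tuplesLE_pairBottoms {E : Type*} [AddCommGroup E] {F : Finset ℕ → E}
    (hF : ∀ S p, p ∈ S → p + 1 ∈ S → F S = 0) (lo s m : ℕ) :
    ∑ c ∈ tuplesLE s m, F (pairBottoms lo c)
      = ∑ S ∈ powersetCard s (Ico lo (lo + 2 * s + m - 1)), F S := by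
  induction s generalizing m F with
  | zero => simp [tuplesLE, pairBottoms]
  | succ s ih =>
    have hlayer : ∀ j, ∑ c ∈ Nat.antidiagonalTuple (s + 1) j, F (pairBottoms lo c)
        = ∑ S ∈ powersetCard s (Ico lo (lo + 2 * s + j)), F (insert (lo + 2 * s + j) S) := by
      intro j
      calc ∑ c ∈ Nat.antidiagonalTuple (s + 1) j, F (pairBottoms lo c)
          = ∑ c ∈ Nat.antidiagonalTuple (s + 1) j,
              F (insert (lo + 2 * s + j) (pairBottoms lo (Fin.tail c))) :=
            sum_congr rfl fun c hc => by rw [pairBottoms, Nat.mem_antidiagonalTuple.1 hc]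
        _ = ∑ c ∈ tuplesLE s j, F (insert (lo + 2 * s + j) (pairBottoms lo c)) :=
            sum_antidiagonalTuple_tail s j fun c => F (insert (lo + 2 * s + j) (pairBottoms lo c))
        _ = ∑ S ∈ powersetCard s (Ico lo (lo + 2 * s + j - 1)), F (insert (lo + 2 * s + j) S) :=
            ih (F := fun S => F (insert (lo + 2 * s + j) S))
              (fun S p h h' => hF _ p (mem_insert_of_mem h) (mem_insert_of_mem h')) j
        _ = ∑ S ∈ powersetCard s (Ico lo (lo + 2 * s + j)), F (insert (lo + 2 * s + j) S) :=
            sum_powersetCard_Ico_pred (F := fun S => F (insert (lo + 2 * s + j) S))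
              (fun S p hp h => hF _ p (mem_insert_of_mem hp) (h ▸ mem_insert_self _ _)) s
    have hcrowded : ∀ t ∈ Ico lo (lo + 2 * s),
        ∑ S ∈ powersetCard s (Ico lo t), F (insert t S) = 0 := fun t ht =>
      sum_powersetCard_insert_eq_zero hF (mem_Ico.1 ht).1 (mem_Ico.1 ht).2
    rw [sum_tuplesLE, sum_powersetCard_succ_Ico,
      ← sum_Ico_consecutive _ (show lo ≤ lo + 2 * s by omega) (by omega), sum_eq_zero hcrowded,
      zero_add, sum_Ico_eq_sum_range]
    simp only [hlayer]
    congr 2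
    omega

end PairCoords

section PairWeight

variable {R : Type*} [CommRing R] (x : ℕ → R)

/-- The Vandermonde product of the points `x p`, `p ∈ S`. -/
def vand (S : Finset ℕ) : R :=
  pairProd (fun p q => x q - x p) S

/-- The factor of a Vandermonde product relating the points `x p, x (p + 1)` to the points
`x q, x (q + 1)`. -/
def pairInter (p q : ℕ) : R :=
  (x q - x p) * (x q - x (p + 1)) * ((x (q + 1) - x p) * (x (q + 1) - x (p + 1)))

/-- The contribution of the points `x p, x (p + 1)`, for `p ∈ S`, to a Vandermonde product, each
point `t` carrying the further factor `G t`. -/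
def pairWeight (G : R → R) (S : Finset ℕ) : R :=
  pairProd (pairInter x) S * ∏ p ∈ S, (x p - x (p + 1)) * (G (x p) * G (x (p + 1)))

variable {x} {G : R → R} {S : Finset ℕ}

lemma vand_insert {p : ℕ} (h : ∀ q ∈ S, q < p) :
    vand x (insert p S) = vand x S * ∏ q ∈ S, (x q - x p) :=
  pairProd_insert_of_forall_lt _ h

lemma pairInter_comm (p q : ℕ) : pairInter x p q = pairInter x q p := by
  unfold pairInter; ring

lemma pairWeight_insert (G : R → R) {p : ℕ} (hp : p ∉ S) :
    pairWeight x G (insert p S) = pairWeight x G S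
      * ((x p - x (p + 1)) * (G (x p) * G (x (p + 1))) * ∏ q ∈ S, pairInter x p q) := by
  rw [pairWeight, pairWeight, pairProd_insert_of_comm pairInter_comm hp, prod_insert hp]
  ring

lemma pairWeight_eq_zero_of_succ_mem {p : ℕ} (hp : p ∈ S) (hp' : p + 1 ∈ S) :
    pairWeight x G S = 0 := by
  rw [pairWeight, pairProd, prod_eq_zero hp'
    (prod_eq_zero (mem_filter.2 ⟨hp, p.lt_succ_self⟩) (by simp [pairInter])), zero_mul]

lemma pairWeight_eq_zero_of_root {p : ℕ} (hp : p ∈ S) (hG : G (x (p + 1)) = 0) :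
    pairWeight x G S = 0 := by
  rw [pairWeight, prod_eq_zero hp (by rw [hG, mul_zero, mul_zero]), mul_zero]

lemma pairWeight_insert_of_swap {p q : ℕ} (h : x q = x (p + 1)) (h' : x (q + 1) = x p)
    (hp : p ∉ S) (hq : q ∉ S) :
    pairWeight x G (insert q S) = -pairWeight x G (insert p S) := by
  have hinter : ∀ y, pairInter x q y = pairInter x p y := fun y => by
    simp only [pairInter, h, h']; ring
  rw [pairWeight_insert _ hp, pairWeight_insert _ hq, h, h']
  simp only [hinter]
  ring

lemma pairWeight_insert_insert_of_swap {p q : ℕ} (hpq : p ≠ q) (h : x q = x (p + 1))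
    (hp : p ∉ S) : pairWeight x G (insert p (insert q S)) = 0 := by
  rw [pairWeight_insert _ (by simp [hpq, hp]),
    prod_eq_zero (mem_insert_self q S) (by simp [pairInter, h]), mul_zero, mul_zero]

/-- Reflecting a pair of points exchanges its two members, which changes the sign of the weight:
the positions in the part of the interval symmetric under the reflection cancel out. -/
theorem sum_pairWeight_Ico_of_reflect [IsAddTorsionFree R] {N lo M M' : ℕ}
    (hx : ∀ p q, p + q = N → x p = x q) (hN : M + M' = N) (hM : M ≤ M') (hlo : lo ≤ M)
    (G : R → R) (s : ℕ) :
    ∑ S ∈ powersetCard s (Ico lo M'), pairWeight x G S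
      = ∑ S ∈ powersetCard s (Ico lo M), pairWeight x G S := by
  rw [← Ico_union_Ico_eq_Ico hlo hM]
  refine sum_powersetCard_union_of_odd (fun q => N - 1 - q) (fun q hq => ?_) (fun q hq => ?_)
    (Ico_disjoint_Ico_consecutive _ _ _) (fun q hq S hqS hσS => ?_) (fun q hq hne S hqS => ?_) s
  all_goals rw [mem_Ico] at hq
  · exact mem_Ico.2 (by omega)
  · omega
  · exact pairWeight_insert_of_swap (hx _ _ (by omega)) (hx _ _ (by omega)) hqS hσS
  · exact pairWeight_insert_insert_of_swap hne (hx _ _ (by omega)) hqS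

lemma prod_pairCoords (lo : ℕ) {s : ℕ} (c : Fin s → ℕ) (f : ℕ → R) :
    ∏ q ∈ pairCoords lo c, f q
      = (∏ q ∈ range lo, f q) * ∏ p ∈ pairBottoms lo c, f p * f (p + 1) := by
  induction s with
  | zero => simp [pairCoords, pairBottoms]
  | succ s ih =>
    have hlt := fun p => @lt_of_mem_pairCoords_tail lo s p c
    rw [pairCoords, pairBottoms, prod_insert, prod_insert, prod_insert, ih]
    · ring
    · exact fun h => (hlt _ (pairBottoms_subset_pairCoords _ _ h)).false
    · exact fun h => (hlt _ h).false
    · rw [mem_insert, not_or]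
      exact ⟨Nat.succ_ne_self _, fun h => (Nat.lt_succ_self _).asymm (hlt _ h)⟩

lemma vand_pairCoords_mul_prod (x : ℕ → R) (H : R → R) (lo : ℕ) {s : ℕ} (c : Fin s → ℕ) :
    vand x (pairCoords lo c) * ∏ q ∈ pairCoords lo c, H (x q)
      = vand x (range lo) * (∏ q ∈ range lo, H (x q))
        * pairWeight x (fun t => H t * ∏ q ∈ range lo, (x q - t)) (pairBottoms lo c) := by
  induction s with
  | zero => simp [pairCoords, pairBottoms, pairWeight, pairProd_empty]
  | succ s ih =>
    have hlt : ∀ q ∈ pairCoords lo (Fin.tail c), q < lo + 2 * s + ∑ i, c i :=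
      fun q => lt_of_mem_pairCoords_tail
    rw [pairCoords, pairBottoms]
    generalize lo + 2 * s + ∑ i, c i = t at hlt
    have hlt' : ∀ q ∈ insert t (pairCoords lo (Fin.tail c)), q < t + 1 :=
      forall_mem_insert .. |>.2 ⟨t.lt_succ_self, fun q hq => (hlt q hq).trans t.lt_succ_self⟩
    have ht : t ∉ pairCoords lo (Fin.tail c) := fun h => (hlt t h).false
    have ht' : t + 1 ∉ insert t (pairCoords lo (Fin.tail c)) := fun h => (hlt' _ h).false
    have hbot : t ∉ pairBottoms lo (Fin.tail c) := fun h => ht (pairBottoms_subset_pairCoords _ _ h)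
    have hinter : ∀ p, pairInter x t p = (x p - x t) * (x (p + 1) - x t)
        * ((x p - x (t + 1)) * (x (p + 1) - x (t + 1))) := fun p => by
      unfold pairInter; ring
    rw [vand_insert hlt', vand_insert hlt, prod_insert ht', prod_insert ht, prod_insert ht,
      pairWeight_insert _ hbot, ← mul_assoc (vand x (range lo) * _), ← ih,
      prod_pairCoords lo _ fun q => x q - x t, prod_pairCoords lo _ fun q => x q - x (t + 1)]
    simp only [hinter, prod_mul_distrib]
    ring

theorem sum_vand_pairCoords_mul_prod (x : ℕ → R) (H : R → R) (lo s m : ℕ) :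
    ∑ c ∈ tuplesLE s m, vand x (pairCoords lo c) * ∏ q ∈ pairCoords lo c, H (x q)
      = vand x (range lo) * (∏ q ∈ range lo, H (x q))
        * ∑ S ∈ powersetCard s (Ico lo (lo + 2 * s + m - 1)),
            pairWeight x (fun t => H t * ∏ q ∈ range lo, (x q - t)) S := by
  rw [← sum_tuplesLE_pairBottoms (fun S p => pairWeight_eq_zero_of_succ_mem), mul_sum]
  exact sum_congr rfl fun c _ => vand_pairCoords_mul_prod x H lo c

end PairWeight

section PairSums

variable {R : Type*} [CommRing R]

/-- The sum of Vandermonde products underlying `z^{(a)}_m` for even `a` below the spin nodes. -/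
def evenSum (x : ℕ → R) (lo s m : ℕ) : R :=
  ∑ c ∈ tuplesLE s m, vand x (pairCoords lo c)

/-- The sum of Vandermonde products underlying `z^{(a)}_m` for odd `a` below the spin nodes. The
multiplicity of the first node is determined by the others, which are summed over. -/
def oddSum (x : ℕ → R) (lo s m : ℕ) : R :=
  ∑ c ∈ tuplesLE s m, vand x (insert (lo + 2 * s + m) (pairCoords lo c))

variable {x : ℕ → R} {N lo s m m' : ℕ}

lemma evenSum_zero (x : ℕ → R) (lo s : ℕ) : evenSum x lo s 0 = vand x (range (lo + 2 * s)) := by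
  rw [evenSum, tuplesLE_zero, sum_singleton, pairCoords_zero]

lemma oddSum_zero (x : ℕ → R) (lo s : ℕ) :
    oddSum x lo s 0 = vand x (range (lo + 2 * s + 1)) := by
  rw [oddSum, tuplesLE_zero, sum_singleton, pairCoords_zero, add_zero, range_add_one]

lemma vand_insert_pairCoords (x : ℕ → R) {c : Fin s → ℕ} (hc : c ∈ tuplesLE s m) :
    vand x (insert (lo + 2 * s + m) (pairCoords lo c))
      = vand x (pairCoords lo c) * ∏ q ∈ pairCoords lo c, (x q - x (lo + 2 * s + m)) :=
  vand_insert fun _ => lt_of_mem_pairCoords hc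

lemma evenSum_eq (x : ℕ → R) (lo s m : ℕ) :
    evenSum x lo s m = vand x (range lo)
      * ∑ S ∈ powersetCard s (Ico lo (lo + 2 * s + m - 1)),
          pairWeight x (fun t => ∏ q ∈ range lo, (x q - t)) S := by
  simpa only [evenSum, prod_const_one, mul_one, one_mul] using
    sum_vand_pairCoords_mul_prod x (fun _ => 1) lo s m

lemma oddSum_eq (x : ℕ → R) (lo s m : ℕ) :
    oddSum x lo s m = vand x (range lo) * (∏ q ∈ range lo, (x q - x (lo + 2 * s + m)))
      * ∑ S ∈ powersetCard s (Ico lo (lo + 2 * s + m)),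
          pairWeight x (fun t => (t - x (lo + 2 * s + m)) * ∏ q ∈ range lo, (x q - t)) S := by
  rw [oddSum, sum_congr rfl fun c => vand_insert_pairCoords x,
    sum_vand_pairCoords_mul_prod x (fun t => t - x (lo + 2 * s + m)), sum_powersetCard_Ico_pred]
  exact fun S p hp h => pairWeight_eq_zero_of_root hp (by rw [h, sub_self, zero_mul])

theorem evenSum_symm [IsAddTorsionFree R] (hx : ∀ p q, p + q = N → x p = x q) (hs : 0 < s)
    (hN : 2 * (lo + 2 * s) + (m + m') = N + 2) (hm : m ≤ m') :
    evenSum x lo s m = evenSum x lo s m' := by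
  rw [evenSum_eq, evenSum_eq, sum_pairWeight_Ico_of_reflect (M := lo + 2 * s + m - 1)
    (M' := lo + 2 * s + m' - 1) hx (by omega) (by omega) (by omega)]

theorem oddSum_symm [IsAddTorsionFree R] (hx : ∀ p q, p + q = N → x p = x q)
    (hN : 2 * (lo + 2 * s) + (m + m') = N) (hm : m ≤ m') :
    oddSum x lo s m = oddSum x lo s m' := by
  have htop : x (lo + 2 * s + m') = x (lo + 2 * s + m) := hx _ _ (by omega)
  rw [oddSum_eq, oddSum_eq, htop, sum_pairWeight_Ico_of_reflect (M := lo + 2 * s + m)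
    (M' := lo + 2 * s + m') hx (by omega) (by omega) (by omega)]

variable [LinearOrder R] [IsStrictOrderedRing R]

lemma vand_pos {S : Finset ℕ} (hx : StrictAntiOn x S) : 0 < vand x S :=
  prod_pos fun _ hp => prod_pos fun _ hq =>
    sub_pos.2 (hx (mem_filter.1 hq).1 hp (mem_filter.1 hq).2)

theorem evenSum_lt_succ (hs : 0 < s) (hx : StrictAntiOn x (Set.Iic (lo + 2 * s + m))) :
    evenSum x lo s m < evenSum x lo s (m + 1) := by
  rw [evenSum, evenSum, sum_tuplesLE, sum_tuplesLE, sum_range_succ _ (m + 1)]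
  refine lt_add_of_pos_right _ (sum_pos (fun c hc => vand_pos (hx.mono fun p hp => ?_))
    ⟨Pi.single ⟨0, hs⟩ (m + 1), by rw [Nat.mem_antidiagonalTuple]; simp⟩)
  exact Nat.le_of_lt_succ
    (lt_of_mem_pairCoords (mem_tuplesLE.2 (Nat.mem_antidiagonalTuple.1 hc).le) hp)

lemma vand_insert_pairCoords_lt_succ (hlo : 0 < lo)
    (hx : StrictAntiOn x (Set.Iic (lo + 2 * s + (m + 1)))) {c : Fin s → ℕ}
    (hc : c ∈ tuplesLE s m) :
    vand x (insert (lo + 2 * s + m) (pairCoords lo c))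
      < vand x (insert (lo + 2 * s + (m + 1)) (pairCoords lo c)) := by
  have hmem : ∀ {p}, p ≤ lo + 2 * s + m → p ∈ Set.Iic (lo + 2 * s + (m + 1)) := fun h =>
    Nat.le_succ_of_le h
  have hlt : ∀ {q}, q ∈ pairCoords lo c → q < lo + 2 * s + m := lt_of_mem_pairCoords hc
  rw [vand_insert_pairCoords x hc, vand_insert_pairCoords x (tuplesLE_mono s m.le_succ hc)]
  refine mul_lt_mul_of_pos_left ?_ (vand_pos (hx.mono fun p hp => hmem (hlt hp).le))
  refine prod_lt_prod_of_nonempty (fun q hq => ?_) (fun q _ => ?_)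
    ⟨0, range_subset_pairCoords lo c (mem_range.2 hlo)⟩
  · exact sub_pos.2 (hx (hmem (hlt hq).le) (hmem le_rfl) (hlt hq))
  · exact sub_lt_sub_left (hx (hmem le_rfl) Set.self_mem_Iic (Nat.lt_succ_self _)) _

theorem oddSum_lt_succ (hlo : 0 < lo) (hx : StrictAntiOn x (Set.Iic (lo + 2 * s + (m + 1)))) :
    oddSum x lo s m < oddSum x lo s (m + 1) := by
  calc oddSum x lo s m
      < ∑ c ∈ tuplesLE s m, vand x (insert (lo + 2 * s + (m + 1)) (pairCoords lo c)) :=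
        sum_lt_sum_of_nonempty ⟨0, zero_mem_tuplesLE s m⟩
          fun c hc => vand_insert_pairCoords_lt_succ hlo hx hc
    _ ≤ oddSum x lo s (m + 1) := by
        refine sum_le_sum_of_subset_of_nonneg (tuplesLE_mono s m.le_succ) fun c hc _ =>
          (vand_pos (hx.mono fun p hp => ?_)).le
        rcases mem_insert.1 hp with rfl | hp
        · exact Set.self_mem_Iic
        · exact (lt_of_mem_pairCoords hc hp).le

end PairSums

section TrigPoints

/-- The points `cos (2 π p / N)`, whose differences are twice the products of sines in a quantum
dimension. -/
noncomputable def cosPt (N p : ℕ) : ℝ :=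
  Real.cos (2 * Real.pi * p / N)

/-- The sine `sin (π p / N)` attached to a positive root on which `λ + ρ` takes the value `p`. -/
noncomputable def sinPt (N p : ℕ) : ℝ :=
  Real.sin (Real.pi * p / N)

variable {N p q u v : ℕ}

lemma cosPt_strictAntiOn (N : ℕ) : StrictAntiOn (cosPt N) {p | 2 * p ≤ N} := by
  intro p _ q hq hpq
  have hqN : 2 * q ≤ N := hq
  have hN : (0 : ℝ) < N := Nat.cast_pos.2 (by omega)
  have hq' : (2 : ℝ) * q ≤ N := by exact_mod_cast hqN
  refine Real.cos_lt_cos_of_nonneg_of_le_pi (by positivity) ?_ ?_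
  · rw [div_le_iff₀ hN]
    nlinarith [Real.pi_pos]
  · gcongr

lemma cosPt_reflect (h : p + q = N) : cosPt N p = cosPt N q := by
  rcases N.eq_zero_or_pos with rfl | hN
  · rw [(Nat.add_eq_zero_iff.1 h).1, (Nat.add_eq_zero_iff.1 h).2]
  have hN' : (N : ℝ) ≠ 0 := Nat.cast_ne_zero.2 hN.ne'
  have hp : (p : ℝ) = N - q := by rw [← h]; push_cast; ring
  rw [cosPt, cosPt, ← Real.cos_two_pi_sub, hp]
  congr 1
  field_simp
  ring

lemma sinPt_pos (hp : 0 < p) (hpN : p < N) : 0 < sinPt N p := by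
  have hN : (0 : ℝ) < N := Nat.cast_pos.2 (hp.trans hpN)
  refine Real.sin_pos_of_pos_of_lt_pi (by positivity) ?_
  rw [div_lt_iff₀ hN]
  gcongr

lemma sinPt_reflect (h : p + q = N) : sinPt N p = sinPt N q := by
  rcases N.eq_zero_or_pos with rfl | hN
  · rw [(Nat.add_eq_zero_iff.1 h).1, (Nat.add_eq_zero_iff.1 h).2]
  have hN' : (N : ℝ) ≠ 0 := Nat.cast_ne_zero.2 hN.ne'
  have hp : (p : ℝ) = N - q := by rw [← h]; push_cast; ring
  rw [sinPt, sinPt, ← Real.sin_pi_sub, hp]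
  congr 1
  field_simp
  ring

lemma sin_add_mul_sin_add_sub (a b d : ℝ) :
    Real.sin (a + d) * Real.sin (b + d) - Real.sin a * Real.sin b
      = Real.sin d * Real.sin (a + b + d) := by
  simp only [Real.sin_add, Real.cos_add]
  linear_combination (Real.sin a * Real.sin b) * Real.sin_sq_add_cos_sq d

lemma sinPt_mul_sinPt_lt (h : u + v + 1 < N) :
    sinPt N u * sinPt N v < sinPt N (u + 1) * sinPt N (v + 1) := by
  have hdiff : sinPt N (u + 1) * sinPt N (v + 1) - sinPt N u * sinPt N v
      = sinPt N 1 * sinPt N (u + v + 1) := by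
    simp only [sinPt, Nat.cast_add, mul_add, add_div]
    exact sin_add_mul_sin_add_sub _ _ _
  rw [← sub_pos, hdiff]
  exact mul_pos (sinPt_pos one_pos (by omega)) (sinPt_pos (by omega) h)

lemma sin_sub_mul_sin_add (x y n : ℝ) :
    Real.sin (Real.pi * (x - y) / n) * Real.sin (Real.pi * (x + y) / n)
      = (Real.cos (2 * Real.pi * y / n) - Real.cos (2 * Real.pi * x / n)) / 2 := by
  have hx : 2 * Real.pi * x / n = Real.pi * (x + y) / n + Real.pi * (x - y) / n := by ring
  have hy : 2 * Real.pi * y / n = Real.pi * (x + y) / n - Real.pi * (x - y) / n := by ring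
  rw [hx, hy, Real.cos_add, Real.cos_sub]
  ring

lemma sin_sub_mul_sin_add_abs (x y n : ℝ) :
    Real.sin (Real.pi * (|x| - |y|) / n) * Real.sin (Real.pi * (|x| + |y|) / n)
      = Real.sin (Real.pi * (x - y) / n) * Real.sin (Real.pi * (x + y) / n) := by
  have heven : ∀ t : ℝ, Real.cos (2 * Real.pi * |t| / n) = Real.cos (2 * Real.pi * t / n) := by
    intro t
    rcases abs_choice t with h | h
    · rw [h]
    · rw [h, mul_neg, neg_div, Real.cos_neg]
  rw [sin_sub_mul_sin_add, sin_sub_mul_sin_add, heven, heven]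

end TrigPoints

section RootPairs

/-- The pairs `i < j` indexing the positive roots `e_i - e_j` and `e_i + e_j` of `D_r`. -/
def rootPairs (r : ℕ) : Finset (ℕ × ℕ) :=
  (Icc 1 r ×ˢ Icc 1 r).filter fun p => p.1 < p.2

variable {r : ℕ}

lemma mem_rootPairs {p : ℕ × ℕ} : p ∈ rootPairs r ↔ 1 ≤ p.1 ∧ p.1 < p.2 ∧ p.2 ≤ r := by
  simp only [rootPairs, mem_filter, mem_product, mem_Icc]
  omega

lemma fst_mem_Icc_of_mem_rootPairs {p : ℕ × ℕ} (hp : p ∈ rootPairs r) : p.1 ∈ Icc 1 r :=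
  (mem_product.1 (mem_filter.1 hp).1).1

lemma snd_mem_Icc_of_mem_rootPairs {p : ℕ × ℕ} (hp : p ∈ rootPairs r) : p.2 ∈ Icc 1 r :=
  (mem_product.1 (mem_filter.1 hp).1).2

/-- The automorphism `i ↦ r + 1 - i` of the index set, acting on pairs. -/
def reversePair (r : ℕ) (p : ℕ × ℕ) : ℕ × ℕ :=
  (r + 1 - p.2, r + 1 - p.1)

lemma reversePair_mem_rootPairs {p : ℕ × ℕ} (hp : p ∈ rootPairs r) :
    reversePair r p ∈ rootPairs r := by
  rw [mem_rootPairs] at hp ⊢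
  simp only [reversePair]
  omega

lemma reversePair_reversePair {p : ℕ × ℕ} (hp : p ∈ rootPairs r) :
    reversePair r (reversePair r p) = p := by
  rw [mem_rootPairs] at hp
  ext <;> simp only [reversePair] <;> omega

lemma prod_rootPairs_reversePair (r : ℕ) (f : ℕ × ℕ → ℝ) :
    ∏ p ∈ rootPairs r, f (reversePair r p) = ∏ p ∈ rootPairs r, f p :=
  prod_nbij' (reversePair r) (reversePair r) (fun _ => reversePair_mem_rootPairs)
    (fun _ => reversePair_mem_rootPairs) (fun _ => reversePair_reversePair)
    (fun _ => reversePair_reversePair) fun _ _ => rfl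

lemma natCast_coxeter_add_level (hr : 1 ≤ r) (k : ℕ) :
    ((2 * (r - 1) + k : ℕ) : ℝ) = 2 * (r : ℝ) - 2 + k := by
  push_cast [Nat.cast_sub hr]
  ring

end RootPairs

section NodeCoord

variable {r k s : ℕ} {e c : Fin s → ℕ}

lemma image_const_sub_Icc (r : ℕ) : (Icc 1 r).image (fun i => r - i) = range r := by
  ext p
  simp only [mem_range, mem_image, mem_Icc]
  exact ⟨fun ⟨i, hi, h⟩ => by omega, fun h => ⟨r - p, by omega, by omega⟩⟩

lemma strictAntiOn_const_sub (r : ℕ) : StrictAntiOn (fun i => r - i) (Icc 1 r : Finset ℕ) := by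
  intro i _ j hj hij
  have := mem_Icc.1 hj
  simp only
  omega

theorem qdimD_eq_vand {lam : ℕ → ℤ} {u : ℕ → ℕ} (hr : 1 ≤ r)
    (hu : StrictAntiOn u (Icc 1 r : Finset ℕ)) (hlam : ∀ i ∈ Icc 1 r, uCoord r lam i = u i) :
    qdimD r k lam = vand (cosPt (2 * (r - 1) + k)) ((Icc 1 r).image u)
      / vand (cosPt (2 * (r - 1) + k)) (range r) := by
  rw [← image_const_sub_Icc, vand, vand, pairProd_image _ hu,
    pairProd_image _ (strictAntiOn_const_sub r), ← prod_div_distrib]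
  refine prod_congr rfl fun p (hp : p ∈ rootPairs r) => ?_
  have h₁ := fst_mem_Icc_of_mem_rootPairs hp
  have h₂ := snd_mem_Icc_of_mem_rootPairs hp
  have hsub : (p.2 : ℝ) - p.1 = (r - p.1 : ℕ) - (r - p.2 : ℕ) := by
    rw [Nat.cast_sub (mem_Icc.1 h₁).2, Nat.cast_sub (mem_Icc.1 h₂).2]
    ring
  have hadd : 2 * (r : ℝ) - p.1 - p.2 = (r - p.1 : ℕ) + (r - p.2 : ℕ) := by
    rw [Nat.cast_sub (mem_Icc.1 h₁).2, Nat.cast_sub (mem_Icc.1 h₂).2]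
    ring
  rw [hlam _ h₁, hlam _ h₂, hsub, hadd, sin_sub_mul_sin_add, sin_sub_mul_sin_add,
    div_div_div_cancel_right₀ two_ne_zero, ← natCast_coxeter_add_level hr]
  rfl

/-- The coordinates of `λ + ρ` for the weight `λ` with multiplicity `c t` at the node `e t`, all of
the nodes being different from the spin nodes. -/
def nodeCoord (r : ℕ) (e c : Fin s → ℕ) (i : ℕ) : ℕ :=
  (∑ t, if i ≤ e t then c t else 0) + (r - i)

lemma nodeCoord_strictAntiOn (r : ℕ) (e c : Fin s → ℕ) :
    StrictAntiOn (nodeCoord r e c) (Icc 1 r : Finset ℕ) := by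
  refine fun i hi j hj hij => add_lt_add_of_le_of_lt (sum_le_sum fun t _ => ?_)
    (strictAntiOn_const_sub r hi hj hij)
  split_ifs <;> omega

lemma uCoord_eq_nodeCoord (hr : 2 ≤ r) (c : Fin s → ℕ) (he : ∀ t, e t ≤ r - 2) {i : ℕ}
    (hi : i ∈ Icc 1 r) :
    uCoord r (fun j => ∑ t, if j = e t then (c t : ℤ) else 0) i = nodeCoord r e c i := by
  have hspin : ∀ j, r - 2 < j → (∑ t, if j = e t then (c t : ℤ) else 0) = 0 := fun j hj =>
    sum_eq_zero fun t _ => if_neg ((he t).trans_lt hj).ne'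
  have hsum : ∑ j ∈ Icc i (r - 2), ((∑ t, if j = e t then (c t : ℤ) else 0 : ℤ) : ℝ)
      = ((∑ t, if i ≤ e t then c t else 0 : ℕ) : ℝ) := by
    push_cast
    rw [sum_comm]
    refine sum_congr rfl fun t _ => ?_
    rw [sum_ite_eq']
    simp only [mem_Icc, he t, and_true]
  have hlast : (∑ t, if r ≤ e t then c t else 0) = 0 :=
    sum_eq_zero fun t _ => if_neg (by have := he t; omega)
  unfold uCoord
  beta_reduce
  rw [hsum, hspin r (by omega), hspin (r - 1) (by omega), nodeCoord, Nat.cast_add,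
    Nat.cast_sub (mem_Icc.1 hi).2]
  split_ifs with h
  · rw [h, hlast]
    simp
  · simp

lemma qdimD_eq_vand_nodeCoord (hr : 2 ≤ r) (c : Fin s → ℕ) (he : ∀ t, e t ≤ r - 2) :
    qdimD r k (fun j => ∑ t, if j = e t then (c t : ℤ) else 0)
      = vand (cosPt (2 * (r - 1) + k)) ((Icc 1 r).image (nodeCoord r e c))
        / vand (cosPt (2 * (r - 1) + k)) (range r) :=
  qdimD_eq_vand (by omega) (nodeCoord_strictAntiOn r e c) fun _ => uCoord_eq_nodeCoord hr c he

lemma image_nodeCoord_succ (r : ℕ) (c : Fin s → ℕ) (he : ∀ t, 1 ≤ e t) :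
    (Icc 1 (r + 1)).image (nodeCoord (r + 1) e c)
      = insert (r + ∑ t, c t) ((Icc 1 r).image (nodeCoord r (fun t => e t - 1) c)) := by
  have hIcc : Icc 1 (r + 1) = insert 1 ((Icc 1 r).image (· + 1)) := by
    rw [image_add_right_Icc, insert_Icc_add_one_left_eq_Icc (by omega)]
  have hfirst : nodeCoord (r + 1) e c 1 = r + ∑ t, c t := by
    simp only [nodeCoord, he, if_true, Nat.add_sub_cancel, add_comm]
  have hshift : ∀ i, nodeCoord (r + 1) e c (i + 1) = nodeCoord r (fun t => e t - 1) c i := by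
    intro i
    simp only [nodeCoord, Nat.add_sub_add_right, Nat.le_sub_iff_add_le (he _)]
  rw [hIcc, image_insert, image_image, hfirst]
  exact congrArg _ (image_congr fun i _ => hshift i)

lemma image_nodeCoord_tail (r : ℕ) {e : Fin (s + 1) → ℕ} (c : Fin (s + 1) → ℕ) (he : e 0 = 0) :
    (Icc 1 r).image (nodeCoord r e c)
      = (Icc 1 r).image (nodeCoord r (Fin.tail e) (Fin.tail c)) := by
  refine image_congr fun i hi => ?_
  have hi₀ : ¬ i ≤ e 0 := by have := (mem_Icc.1 hi).1; omega
  rw [nodeCoord, Fin.sum_univ_succ, if_neg hi₀, zero_add]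
  rfl

lemma image_nodeCoord_even (lo : ℕ) (c : Fin s → ℕ) :
    (Icc 1 (lo + 2 * s)).image (nodeCoord (lo + 2 * s) (fun t => 2 * (t : ℕ) + 2) c)
      = pairCoords lo c := by
  induction s with
  | zero =>
    rw [pairCoords, ← image_const_sub_Icc]
    exact image_congr fun i _ => by simp [nodeCoord]
  | succ s ih =>
    have hr : lo + 2 * (s + 1) = lo + 2 * s + 1 + 1 := by ring
    rw [hr, image_nodeCoord_succ _ _ (fun t => by omega),
      image_nodeCoord_succ _ _ (fun t => by omega), image_nodeCoord_tail _ _ (by simp),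
      pairCoords, ← ih, add_right_comm (lo + 2 * s)]
    rfl

lemma image_nodeCoord_odd (lo : ℕ) (c : Fin (s + 1) → ℕ) :
    (Icc 1 (lo + 2 * s + 1)).image (nodeCoord (lo + 2 * s + 1) (fun t => 2 * (t : ℕ) + 1) c)
      = insert (lo + 2 * s + ∑ t, c t) (pairCoords lo (Fin.tail c)) := by
  rw [image_nodeCoord_succ _ _ (fun t => by omega), image_nodeCoord_tail _ _ (by simp),
    ← image_nodeCoord_even]
  rfl

variable {lo : ℕ}

theorem zD_even (hlo : 2 ≤ lo) (k s : ℕ) :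
    zD (lo + 2 * s) k (2 * s) = fun m =>
      evenSum (cosPt (2 * (lo + 2 * s - 1) + k)) lo s m
        / evenSum (cosPt (2 * (lo + 2 * s - 1) + k)) lo s 0 := by
  funext m
  have hs : 2 * s / 2 = s := by omega
  rw [zD, if_neg (by omega), if_neg (by omega), hs, evenSum_zero, evenSum, sum_div]
  refine sum_congr rfl fun c _ => ?_
  rw [qdimD_eq_vand_nodeCoord (e := fun t : Fin s => 2 * (t : ℕ) + 2) (by omega) c
    (fun t => by omega), image_nodeCoord_even]

theorem zD_odd (hlo : 2 ≤ lo) (k s : ℕ) :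
    zD (lo + 2 * s + 1) k (2 * s + 1) = fun m =>
      oddSum (cosPt (2 * (lo + 2 * s) + k)) lo s m
        / oddSum (cosPt (2 * (lo + 2 * s) + k)) lo s 0 := by
  funext m
  have hs : (2 * s + 1 + 1) / 2 = s + 1 := by omega
  rw [zD, if_neg (by omega), if_pos (by omega), hs, filter_sum_eq_antidiagonalTuple, oddSum_zero,
    oddSum, sum_div, ← sum_antidiagonalTuple_tail s m fun c =>
      vand _ (insert (lo + 2 * s + m) (pairCoords lo c)) / _]
  refine sum_congr rfl fun c hc => ?_
  rw [qdimD_eq_vand_nodeCoord (e := fun t : Fin (s + 1) => 2 * (t : ℕ) + 1) (by omega) c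
    (fun t => by omega), image_nodeCoord_odd, Nat.mem_antidiagonalTuple.1 hc]
  rfl

end NodeCoord

section Spin

/-- The product of the sines attached to the roots `e_i + e_j` and a multiple `m` of a spin
weight. -/
noncomputable def spinProd (N r m : ℕ) : ℝ :=
  ∏ p ∈ rootPairs r, sinPt N (m + (2 * r - p.1 - p.2))

variable {N r a m m' : ℕ}

lemma spinProd_reversePair (N r m : ℕ) :
    spinProd N r m = ∏ p ∈ rootPairs r, sinPt N (m + (p.1 + p.2 - 2)) := by
  rw [spinProd, ← prod_rootPairs_reversePair]
  refine prod_congr rfl fun p hp => ?_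
  rw [mem_rootPairs] at hp
  congr 2
  simp only [reversePair]
  omega

lemma spinProd_pos (h : 2 * (r - 1) + m ≤ N) : 0 < spinProd N r m :=
  prod_pos fun p hp => by
    rw [mem_rootPairs] at hp
    exact sinPt_pos (by omega) (by omega)

theorem spinProd_symm (hN : 2 * (r - 1) + (m + m') = N) : spinProd N r m = spinProd N r m' := by
  rw [spinProd_reversePair N r m', spinProd]
  refine prod_congr rfl fun p hp => sinPt_reflect ?_
  rw [mem_rootPairs] at hp
  omega

theorem spinProd_lt_succ (hr : 2 ≤ r) (hN : 2 * (r - 1) + 2 * (m + 1) ≤ N) :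
    spinProd N r m < spinProd N r (m + 1) := by
  have hsq : ∀ m, spinProd N r m ^ 2 = ∏ p ∈ rootPairs r,
      sinPt N (m + (2 * r - p.1 - p.2)) * sinPt N (m + (p.1 + p.2 - 2)) := fun m => by
    rw [prod_mul_distrib, ← spinProd_reversePair, ← spinProd, sq]
  refine lt_of_pow_lt_pow_left₀ 2 (spinProd_pos (by omega)).le ?_
  rw [hsq, hsq]
  refine prod_lt_prod_of_nonempty (fun p hp => ?_) (fun p hp => ?_)
    ⟨(1, 2), mem_rootPairs.2 ⟨le_rfl, one_lt_two, hr⟩⟩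
  all_goals rw [mem_rootPairs] at hp
  · exact mul_pos (sinPt_pos (by omega) (by omega)) (sinPt_pos (by omega) (by omega))
  · rw [add_right_comm, add_right_comm m 1]
    exact sinPt_mul_sinPt_lt (by omega)

lemma uCoord_spin (ha : a = r - 1 ∨ a = r) (m : ℕ) {i : ℕ} (hi : 1 ≤ i) (hir : i < r) :
    uCoord r (fun j => if j = a then (m : ℤ) else 0) i = m / 2 + (r - i : ℕ) := by
  have hsum : ∑ j ∈ Icc i (r - 2), ((if j = a then (m : ℤ) else 0 : ℤ) : ℝ) = 0 :=
    sum_eq_zero fun j hj => by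
      rw [if_neg (by have := mem_Icc.1 hj; omega), Int.cast_zero]
  rw [uCoord, if_neg hir.ne, hsum, Nat.cast_sub hir.le]
  rcases ha with rfl | rfl
  · simp [show r ≠ r - 1 by omega]
  · simp [show a - 1 ≠ a by omega]

lemma abs_uCoord_spin_self (hr : 1 ≤ r) (ha : a = r - 1 ∨ a = r) (m : ℕ) :
    |uCoord r (fun j => if j = a then (m : ℤ) else 0) r| = m / 2 := by
  rw [uCoord, if_pos rfl]
  rcases ha with rfl | rfl
  · simp [show r ≠ r - 1 by omega, abs_div]
  · simp [show a - 1 ≠ a by omega, abs_div]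

lemma abs_uCoord_spin (ha : a = r - 1 ∨ a = r) (m : ℕ) {i : ℕ} (hi : i ∈ Icc 1 r) :
    |uCoord r (fun j => if j = a then (m : ℤ) else 0) i| = m / 2 + (r - i : ℕ) := by
  obtain ⟨hi₁, hir⟩ := mem_Icc.1 hi
  rcases hir.eq_or_lt with rfl | hir
  · rw [abs_uCoord_spin_self hi₁ ha, Nat.sub_self, Nat.cast_zero, add_zero]
  · rw [uCoord_spin ha m hi₁ hir, abs_of_nonneg (by positivity)]

theorem qdimD_spin (ha : a = r - 1 ∨ a = r) (k m : ℕ) :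
    qdimD r k (fun j => if j = a then (m : ℤ) else 0)
      = spinProd (2 * (r - 1) + k) r m / spinProd (2 * (r - 1) + k) r 0 := by
  rw [spinProd, spinProd, ← prod_div_distrib]
  refine prod_congr rfl fun p (hp : p ∈ rootPairs r) => ?_
  have h₁ := fst_mem_Icc_of_mem_rootPairs hp
  have h₂ := snd_mem_Icc_of_mem_rootPairs hp
  rw [mem_rootPairs] at hp
  have hsub : ((p.2 - p.1 : ℕ) : ℝ) = p.2 - p.1 := Nat.cast_sub hp.2.1.le
  have hadd : ((2 * r - p.1 - p.2 : ℕ) : ℝ) = 2 * r - p.1 - p.2 := by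
    rw [Nat.sub_sub, Nat.cast_sub (by omega)]
    push_cast
    ring
  have hdiff : (m : ℝ) / 2 + (r - p.1 : ℕ) - (m / 2 + (r - p.2 : ℕ)) = (p.2 - p.1 : ℕ) := by
    rw [hsub, Nat.cast_sub (mem_Icc.1 h₁).2, Nat.cast_sub (mem_Icc.1 h₂).2]
    ring
  have hsum : (m : ℝ) / 2 + (r - p.1 : ℕ) + (m / 2 + (r - p.2 : ℕ))
      = (m + (2 * r - p.1 - p.2) : ℕ) := by
    rw [Nat.cast_add, hadd, Nat.cast_sub (mem_Icc.1 h₁).2, Nat.cast_sub (mem_Icc.1 h₂).2]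
    ring
  have hne : sinPt (2 * (r - 1) + k) (p.2 - p.1) ≠ 0 := (sinPt_pos (by omega) (by omega)).ne'
  rw [← sin_sub_mul_sin_add_abs, abs_uCoord_spin ha m h₁, abs_uCoord_spin ha m h₂, hdiff, hsum,
    ← hsub, ← hadd, ← natCast_coxeter_add_level (by omega), zero_add]
  exact mul_div_mul_left _ _ hne

theorem zD_spin (ha : a = r - 1 ∨ a = r) (k : ℕ) :
    zD r k a = fun m => spinProd (2 * (r - 1) + k) r m / spinProd (2 * (r - 1) + k) r 0 := by
  funext m
  rw [zD, if_pos ha, qdimD_spin ha]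

end Spin

section Main

variable {k : ℕ}

/-- The properties of a quantum dimension solution at level `k` at one node: positivity, symmetry,
the unit boundary condition and unimodality. -/
structure IsKNSSequence (k : ℕ) (z : ℕ → ℝ) : Prop where
  pos : ∀ m ≤ k, 0 < z m
  symm : ∀ m, 1 ≤ m → m ≤ k - 1 → z m = z (k - m)
  unit : z k = 1
  unimodal : ∀ m, 1 ≤ m → m ≤ k / 2 → z (m - 1) < z m

theorem isKNSSequence_div {P : ℕ → ℝ} (hzero : 0 < P 0)
    (hsymm : ∀ m m', m + m' = k → m ≤ m' → P m = P m')
    (hlt : ∀ m, 2 * (m + 1) ≤ k → P m < P (m + 1)) :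
    IsKNSSequence k fun m => P m / P 0 := by
  have hpos : ∀ m, 2 * m ≤ k → 0 < P m := by
    intro m hm
    induction m with
    | zero => exact hzero
    | succ m ih => exact (ih (by omega)).trans (hlt m hm)
  have hsymm' : ∀ m ≤ k, P m = P (k - m) := fun m hm => by
    rcases le_total m (k - m) with h | h
    · exact hsymm _ _ (Nat.add_sub_cancel' hm) h
    · exact (hsymm _ _ (Nat.sub_add_cancel hm) h).symm
  refine ⟨fun m hm => div_pos ?_ hzero, fun m _ hm => ?_, ?_, fun m hm hm' => ?_⟩
  · rcases le_total (2 * m) k with h | h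
    · exact hpos m h
    · rw [hsymm' m hm]
      exact hpos _ (by omega)
  · rw [hsymm' m (by omega)]
  · rw [hsymm' k le_rfl, Nat.sub_self, div_self hzero.ne']
  · have := hlt (m - 1) (by omega)
    rw [Nat.sub_add_cancel hm] at this
    exact div_lt_div_of_pos_right this hzero

lemma isKNSSequence_zD_spin {r a : ℕ} (hr : 2 ≤ r) (ha : a = r - 1 ∨ a = r) (k : ℕ) :
    IsKNSSequence k (zD r k a) := by
  rw [zD_spin ha]
  exact isKNSSequence_div (spinProd_pos (by omega)) (fun m m' h _ => spinProd_symm (by omega))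
    fun m hm => spinProd_lt_succ hr (by omega)

lemma isKNSSequence_zD_even {lo s : ℕ} (hlo : 2 ≤ lo) (hs : 0 < s) (k : ℕ) :
    IsKNSSequence k (zD (lo + 2 * s) k (2 * s)) := by
  have hanti := cosPt_strictAntiOn (2 * (lo + 2 * s - 1) + k)
  rw [zD_even hlo]
  refine isKNSSequence_div ?_ (fun m m' h hm => evenSum_symm (fun _ _ => cosPt_reflect) hs
    (by omega) hm) fun m hm => evenSum_lt_succ hs (hanti.mono fun p hp => ?_)
  · rw [evenSum_zero]
    refine vand_pos (hanti.mono fun p hp => ?_)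
    have := mem_range.1 hp
    exact show 2 * p ≤ _ by omega
  · have := Set.mem_Iic.1 hp
    exact show 2 * p ≤ _ by omega

lemma isKNSSequence_zD_odd {lo : ℕ} (hlo : 2 ≤ lo) (k s : ℕ) :
    IsKNSSequence k (zD (lo + 2 * s + 1) k (2 * s + 1)) := by
  have hanti := cosPt_strictAntiOn (2 * (lo + 2 * s) + k)
  rw [zD_odd hlo]
  refine isKNSSequence_div ?_ (fun m m' h hm => oddSum_symm (fun _ _ => cosPt_reflect)
    (by omega) hm) fun m hm => oddSum_lt_succ (by omega) (hanti.mono fun p hp => ?_)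
  · rw [oddSum_zero]
    refine vand_pos (hanti.mono fun p hp => ?_)
    have := mem_range.1 hp
    exact show 2 * p ≤ _ by omega
  · have := Set.mem_Iic.1 hp
    exact show 2 * p ≤ _ by omega

end Main

end QuantumDimD

open QuantumDimD in
theorem stmt12_general {r a : ℕ} (hr : 2 ≤ r) (ha : a ∈ Finset.Icc 1 r) (k : ℕ) :
    IsKNSSequence k (zD r k a) := by
  rw [Finset.mem_Icc] at ha
  by_cases hspin : a = r - 1 ∨ a = r
  · exact isKNSSequence_zD_spin hr hspin k
  rcases a.even_or_odd' with ⟨s, rfl | rfl⟩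
  · obtain ⟨lo, rfl⟩ := Nat.exists_eq_add_of_le' ha.2
    exact isKNSSequence_zD_even (by omega) (by omega) k
  · obtain ⟨lo, rfl⟩ := Nat.exists_eq_add_of_le' ha.2
    exact isKNSSequence_zD_odd (by omega) k s

/-- The KNS conjecture for `D_r`, first part: the quantum dimension solution satisfies
positivity, symmetry, the unit boundary condition, and unimodality. -/
theorem stmt12 (r k : ℕ) (hr : 4 ≤ r) (hk : 1 ≤ k)
    (a : ℕ) (ha : a ∈ Finset.Icc 1 r) :
    (∀ m ≤ k, 0 < zD r k a m) ∧
    (∀ m : ℕ, 1 ≤ m → m ≤ k - 1 → zD r k a m = zD r k a (k - m)) ∧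
    zD r k a k = 1 ∧
    (∀ m : ℕ, 1 ≤ m → m ≤ k / 2 → zD r k a (m - 1) < zD r k a m) := by
  have h := stmt12_general (by omega : 2 ≤ r) ha k
  exact ⟨h.pos, h.symm, h.unit, h.unimodal⟩
end

section
/- For every a ∈ I = {1,…,r}, the quantum dimension solution of type D_r satisfies z^{(a)}_{k+1} = 0. -/
/-!
Since `sin (x - z) * sin (x + z) = cos² z - cos² x`, the quantum dimension of `λ` is a quotient of
two Vandermonde determinants, in the nodes `cos² (π u_i / n)` with `n = 2 r - 2 + k`; these nodes
are invariant under `u ↦ n - u`. For the weights in the sum `z^{(a)}_{k+1}`, with `a` not a spin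
index, the coordinates `u_i` form dominoes `{p, p - 1}` of consecutive integers next to entries that
do not depend on the weight. The reflection `p ↦ n + 1 - p` exchanges the two nodes of a domino and
so changes the sign of the determinant, while permuting whole dominoes does not change it. Hence
the sum is, up to a factorial, the sum over all tuples of domino tops `p` in an interval. Tuples
with a domino whose reflection stays in the interval cancel in pairs; in all others the dominoes are
so crowded that two nodes coincide, so every term vanishes. For the spin indices, and for `a = 1`
where there is no domino, the factor `sin (π (u_1 + u_2) / n) = sin π` vanishes.
-/

section SkewSymmetric

variable {ι X M : Type*} [Fintype ι] [DecidableEq ι] [AddCommGroup M]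

/-- A function of a family of variables which changes sign under every transposition of them; no
linearity is required, so that the Vandermonde determinant qualifies. -/
def IsSkewSymmetric (F : (ι → X) → M) : Prop :=
  ∀ (σ : Equiv.Perm ι) (v : ι → X), F (v ∘ σ) = Equiv.Perm.sign σ • F v

theorem isSkewSymmetric_det_vandermonde {R : Type*} [CommRing R] (n : ℕ) :
    IsSkewSymmetric fun v : Fin n → R => (Matrix.vandermonde v).det := fun σ v => by
  rw [Units.smul_def, zsmul_eq_mul, ← Matrix.det_permute]
  rfl

namespace IsSkewSymmetric

variable {F : (ι → X) → M}

theorem eq_zero_of_eq [IsAddTorsionFree M] (hF : IsSkewSymmetric F) {v : ι → X} {i j : ι}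
    (hij : i ≠ j) (hv : v i = v j) : F v = 0 := by
  have hswap : v ∘ Equiv.swap i j = v := by
    ext l
    rw [Function.comp_apply, Equiv.swap_apply_def]
    split_ifs <;> simp [*]
  have h := hF (Equiv.swap i j) v
  rwa [hswap, Equiv.Perm.sign_swap hij, Units.neg_smul, one_smul, self_eq_neg] at h

theorem extend_comp_perm {β : Type*} [Fintype β] [DecidableEq β] (hF : IsSkewSymmetric F)
    (d : β ↪ ι) (σ : Equiv.Perm β) (g : β → X) (τ : ι → X) :
    F (Function.extend d (g ∘ σ) τ) = Equiv.Perm.sign σ • F (Function.extend d g τ) := by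
  rw [← Equiv.Perm.viaFintypeEmbedding_sign σ d, ← hF]
  congr 1
  ext l
  by_cases hl : l ∈ Set.range d
  · obtain ⟨q, rfl⟩ := hl
    simp [d.injective.extend_apply]
  · simp [Function.extend_apply' _ _ _ hl, Equiv.Perm.viaFintypeEmbedding_apply_notMem_range, hl]

end IsSkewSymmetric

end SkewSymmetric

section Dominoes

variable {ι X M : Type*} {b : ℕ}

/-- The family `ι → X` obtained by laying, for every `i : Fin b`, a domino on the two consecutive
integers `p i` and `p i - 1`: the slots `d (i, 0)` and `d (i, 1)` carry `x (p i)` and `x (p i - 1)`,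
and the slots not met by `d` keep their value under `τ`. -/
noncomputable def dominoFamily (x : ℤ → X) (d : Fin b × Fin 2 ↪ ι) (τ : ι → X)
    (p : Fin b → ℤ) : ι → X :=
  Function.extend d (fun q => x (p q.1 - (q.2 : ℕ))) τ

theorem dominoFamily_apply (x : ℤ → X) (d : Fin b × Fin 2 ↪ ι) (τ : ι → X) (p : Fin b → ℤ)
    (i : Fin b) (ε : Fin 2) : dominoFamily x d τ p (d (i, ε)) = x (p i - (ε : ℕ)) :=
  d.injective.extend_apply _ _ _

theorem dominoFamily_apply_of_notMem (x : ℤ → X) (d : Fin b × Fin 2 ↪ ι) (τ : ι → X) (p : Fin b → ℤ)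
    {l : ι} (hl : l ∉ Set.range d) : dominoFamily x d τ p l = τ l :=
  Function.extend_apply' _ _ _ hl

/-- The slots of `b` dominoes among `r` coordinates: the two halves of the `i`-th one sit at the
consecutive places `o + 2 i` and `o + 2 i + 1`. -/
def dominoSlot {b o r : ℕ} (h : 2 * b + o ≤ r) : Fin b × Fin 2 ↪ Fin r where
  toFun q := ⟨2 * q.1 + q.2 + o, by omega⟩
  inj' := by
    rintro ⟨i, ε⟩ ⟨j, δ⟩ h
    simp only [Fin.mk.injEq] at h
    ext <;> simp only <;> omega

theorem dominoSlot_apply {b o r : ℕ} (h : 2 * b + o ≤ r) (i : Fin b) (ε : Fin 2) :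
    (dominoSlot h (i, ε) : ℕ) = 2 * i + ε + o :=
  rfl

theorem mem_range_dominoSlot {b o r : ℕ} (h : 2 * b + o ≤ r) {l : Fin r} :
    l ∈ Set.range (dominoSlot h) ↔ o ≤ l ∧ l < 2 * b + o := by
  constructor
  · rintro ⟨⟨i, ε⟩, rfl⟩
    rw [dominoSlot_apply]
    omega
  · intro hl
    refine ⟨(⟨(l - o) / 2, by omega⟩, ⟨(l - o) % 2, by omega⟩), Fin.ext ?_⟩
    rw [dominoSlot_apply]
    simp only
    omega

namespace IsSkewSymmetric

variable [Fintype ι] [DecidableEq ι] [AddCommGroup M] {F : (ι → X) → M}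

theorem dominoFamily_comp_perm (hF : IsSkewSymmetric F) (x : ℤ → X)
    (d : Fin b × Fin 2 ↪ ι) (τ : ι → X) (σ : Equiv.Perm (Fin b)) (p : Fin b → ℤ) :
    F (dominoFamily x d τ (p ∘ σ)) = F (dominoFamily x d τ p) := by
  have h := hF.extend_comp_perm d (Equiv.prodCongrLeft fun _ => σ)
    (fun q => x (p q.1 - (q.2 : ℕ))) τ
  rwa [Equiv.Perm.sign_prodCongrLeft, Fin.prod_univ_two, Int.units_mul_self, one_smul] at h

theorem dominoFamily_update_sub (hF : IsSkewSymmetric F) {x : ℤ → X} {N : ℤ}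
    (hx : ∀ s, x (N - 1 - s) = x s) (d : Fin b × Fin 2 ↪ ι) (τ : ι → X) (p : Fin b → ℤ)
    (i : Fin b) :
    F (dominoFamily x d τ (Function.update p i (N - p i))) = -F (dominoFamily x d τ p) := by
  have h := hF.extend_comp_perm d (Equiv.swap (i, 0) (i, 1)) (fun q => x (p q.1 - (q.2 : ℕ))) τ
  rw [Equiv.Perm.sign_swap (by simp), Units.neg_smul, one_smul] at h
  rw [dominoFamily, dominoFamily, ← h]
  congr 2
  ext ⟨j, ε⟩
  rcases eq_or_ne j i with rfl | hj
  · fin_cases ε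
    · simp [← hx (p j - 1)]
    · simp [← hx (p j), sub_right_comm]
  · simp [hj, Equiv.swap_apply_of_ne_of_ne]

variable [IsAddTorsionFree M]

theorem dominoFamily_eq_zero_of_eq (hF : IsSkewSymmetric F) (x : ℤ → X) (d : Fin b × Fin 2 ↪ ι)
    (τ : ι → X) {p : Fin b → ℤ} {i j : Fin b} (hij : i ≠ j) (hp : p i = p j) :
    F (dominoFamily x d τ p) = 0 :=
  hF.eq_zero_of_eq (i := d (i, 0)) (j := d (j, 0)) (by simp [hij])
    (by rw [dominoFamily_apply, dominoFamily_apply, hp])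

theorem dominoFamily_eq_zero_of_add_one_eq (hF : IsSkewSymmetric F) (x : ℤ → X)
    (d : Fin b × Fin 2 ↪ ι) (τ : ι → X) {p : Fin b → ℤ} {i j : Fin b} (hp : p i + 1 = p j) :
    F (dominoFamily x d τ p) = 0 :=
  hF.eq_zero_of_eq (i := d (i, 0)) (j := d (j, 1)) (by simp)
    (by simp [dominoFamily_apply, ← hp])

theorem dominoFamily_eq_zero_of_notMem (hF : IsSkewSymmetric F) (x : ℤ → X) (d : Fin b × Fin 2 ↪ ι)
    {τ : ι → X} {p : Fin b → ℤ} {i : Fin b} {ε : Fin 2} {l : ι} (hl : l ∉ Set.range d)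
    (hp : x (p i - (ε : ℕ)) = τ l) : F (dominoFamily x d τ p) = 0 :=
  hF.eq_zero_of_eq (i := d (i, ε)) (j := l) (fun h => hl ⟨_, h⟩)
    (by rw [dominoFamily_apply, dominoFamily_apply_of_notMem x d τ p hl, hp])

end IsSkewSymmetric

end Dominoes

section TupleSums

open Finset Nat

open scoped Classical in
theorem sum_piFinset_eq_factorial_smul_sum_strictAnti {α M : Type*} [LinearOrder α]
    [AddCommMonoid M] {b : ℕ} {T : (Fin b → α) → M}
    (hperm : ∀ (σ : Equiv.Perm (Fin b)) p, T (p ∘ σ) = T p)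
    (hinj : ∀ p, ¬ Function.Injective p → T p = 0) (U : Finset α) :
    ∑ p ∈ Fintype.piFinset fun _ => U, T p
      = b ! • ∑ p ∈ Fintype.piFinset (fun _ => U) with StrictAnti p, T p := by
  have hsum : b ! • ∑ p ∈ Fintype.piFinset (fun _ => U) with StrictAnti p, T p
      = ∑ q ∈ (univ : Finset (Equiv.Perm (Fin b))) ×ˢ
          {p ∈ Fintype.piFinset fun _ : Fin b => U | StrictAnti p}, T (q.2 ∘ q.1) := by
    rw [sum_product]
    simp only [hperm, sum_const, Finset.card_univ, Fintype.card_perm, Fintype.card_fin]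
  rw [hsum]
  symm
  refine sum_of_injOn (fun q => q.2 ∘ q.1) ?_ ?_ ?_ fun _ _ => rfl
  · rintro ⟨σ, p⟩ hp ⟨σ', p'⟩ hp' (h : p ∘ σ = p' ∘ σ')
    simp only [coe_product, coe_univ, coe_filter, Set.mem_prod, Set.mem_univ, true_and,
      Set.mem_ofPred_eq] at hp hp'
    have hpp' : p = p' := (hp.2.range_inj hp'.2).1 <| by
      rw [← EquivLike.range_comp p σ, h, EquivLike.range_comp]
    subst hpp'
    exact Prod.ext (DFunLike.coe_injective (hp.2.injective.comp_left h)) rfl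
  · rintro ⟨σ, p⟩ hp
    simp_all
  · intro p hp hnot
    by_contra hne
    have hpinj : Function.Injective p := not_imp_comm.1 (hinj p) hne
    let σ := Tuple.sort (OrderDual.toDual ∘ p)
    have hanti : Antitone (p ∘ σ) := fun _ _ h => Tuple.monotone_sort (OrderDual.toDual ∘ p) h
    refine hnot ⟨(σ⁻¹, p ∘ σ), ?_, ?_⟩
    · simpa [hanti.strictAnti_of_injective (hpinj.comp σ.injective)] using
        fun i => Fintype.mem_piFinset.1 hp (σ i)
    · ext i
      simp

theorem sum_piFinset_eq_sum_piFinset_filter_notMem {ι α M : Type*} [Fintype ι] [DecidableEq ι]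
    [DecidableEq α] [AddCommGroup M] [IsAddTorsionFree M] {T : (ι → α) → M} {ρ : α → α}
    (hρ : Function.Involutive ρ)
    (hT : ∀ p i, T (Function.update p i (ρ (p i))) = -T p) (U : Finset α) :
    ∑ p ∈ Fintype.piFinset fun _ => U, T p
      = ∑ p ∈ Fintype.piFinset fun _ => {s ∈ U | ρ s ∉ U}, T p := by
  -- The set of coordinates whose mirror image stays in `U` is unchanged when one of them is
  -- reflected, so the tuples with a given nonempty such set cancel in pairs.
  rw [← sum_fiberwise _ fun p => ({i | ρ (p i) ∈ U} : Finset ι), sum_eq_single ∅]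
  · refine sum_congr ?_ fun _ _ => rfl
    ext p
    simp [filter_eq_empty_iff, forall_and]
  · intro I _ hI
    obtain ⟨i, hi⟩ := nonempty_iff_ne_empty.2 hI
    refine sum_involution (fun p _ => Function.update p i (ρ (p i))) ?_ ?_ ?_ ?_
    · intro p _
      rw [hT, add_neg_cancel]
    · intro p _ hne heq
      exact hne (self_eq_neg.1 (heq ▸ hT p i :))
    · intro p hp
      simp only [mem_filter, Fintype.mem_piFinset] at hp ⊢
      have hpi : ρ (p i) ∈ U := by simpa [← hp.2] using hi
      refine ⟨fun j => ?_, ?_⟩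
      · rcases eq_or_ne j i with rfl | hj <;> simp [*]
      · rw [← hp.2]
        ext j
        rcases eq_or_ne j i with rfl | hj
        · simp [hρ _, hpi, hp.1]
        · simp [hj]
    · intro p _
      simp [hρ _]
  · simp

theorem exists_ne_eq_or_add_one_eq {b : ℕ} (hb : 0 < b) {lo : ℤ} {p : Fin b → ℤ}
    (hp : ∀ i, lo ≤ p i ∧ p i < lo + 2 * (b - 1)) :
    ∃ i j, i ≠ j ∧ (p i = p j ∨ p i + 1 = p j) := by
  -- Cut the window into `b - 1` pairs of consecutive integers: two of the `b` values share a pair.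
  obtain ⟨i, -, j, -, hij, h⟩ := exists_ne_map_eq_of_card_lt_of_maps_to
    (s := univ) (t := range (b - 1)) (f := fun i => ((p i - lo) / 2).toNat) (by simpa)
    (fun i _ => by have := hp i; simp only [coe_range, Set.mem_Iio]; omega)
  have hi := hp i
  have hj := hp j
  grind

theorem sum_composition_eq_sum_tail {M : Type*} [AddCommMonoid M] (b m : ℕ)
    (g : (Fin (b + 1) → ℕ) → M) :
    ∑ c ∈ (Fintype.piFinset fun _ : Fin (b + 1) => range (m + 1)).filter (fun c => ∑ i, c i = m),
        g c
      = ∑ c ∈ (Fintype.piFinset fun _ : Fin b => range (m + 1)).filter (fun c => ∑ i, c i ≤ m),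
        g (Fin.cons (m - ∑ i, c i) c) := by
  have hcons : ∀ c : Fin (b + 1) → ℕ, ∑ i, c i = m →
      (Fin.cons (m - ∑ i, Fin.tail c i) (Fin.tail c) : Fin (b + 1) → ℕ) = c := fun c hc => by
    rw [Fin.sum_univ_succ] at hc
    rw [show m - ∑ i, Fin.tail c i = c 0 by simp only [Fin.tail]; omega, Fin.cons_self_tail]
  refine sum_bij' (fun c _ => Fin.tail c) (fun c _ => Fin.cons (m - ∑ i, c i) c) ?_ ?_
    (fun c hc => hcons c (mem_filter.1 hc).2) (fun _ _ => Fin.tail_cons _ _)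
    (fun c hc => by rw [hcons c (mem_filter.1 hc).2])
  · intro c hc
    simp only [mem_filter, Fintype.mem_piFinset, Fin.sum_univ_succ] at hc ⊢
    exact ⟨fun i => hc.1 i.succ, by simp only [Fin.tail]; omega⟩
  · intro c hc
    simp only [mem_filter, Fintype.mem_piFinset, Fin.sum_univ_succ, Fin.forall_fin_succ,
      Fin.cons_zero, Fin.cons_succ, mem_range] at hc ⊢
    exact ⟨⟨by omega, hc.1⟩, by omega⟩

end TupleSums

section DominoPos

open Finset

variable {b : ℕ} (R : ℤ) (c : Fin b → ℕ)

/-- The top node `R - 1 - 2 i + c_i + c_{i+1} + ⋯` of the `i`-th domino. The parts `c_l` are the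
gaps between consecutive dominoes; an index `i ≥ b` gives the top of a domino of the packed
configuration `c = 0`. -/
def dominoPos (i : ℕ) : ℤ :=
  R - 1 - 2 * i + ∑ l : Fin b, if i ≤ l then (c l : ℤ) else 0

theorem dominoPos_of_lt (i : Fin b) : dominoPos R c i = dominoPos R c (i + 1) + 2 + c i := by
  have hsplit : ∑ l : Fin b, (if (i : ℕ) ≤ l then (c l : ℤ) else 0)
      = (∑ l : Fin b, if (i : ℕ) + 1 ≤ l then (c l : ℤ) else 0)
        + ∑ l : Fin b, if l = i then (c l : ℤ) else 0 := by
    rw [← sum_add_distrib]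
    refine sum_congr rfl fun l _ => ?_
    simp only [Fin.ext_iff]
    split_ifs <;> omega
  rw [sum_ite_eq', if_pos (mem_univ i)] at hsplit
  rw [dominoPos, dominoPos, hsplit]
  push_cast
  ring

theorem dominoPos_of_le {i : ℕ} (hi : b ≤ i) : dominoPos R c i = R - 1 - 2 * i := by
  rw [dominoPos, sum_eq_zero fun l _ => if_neg (by omega), add_zero]

theorem dominoPos_zero : dominoPos R c 0 = R - 1 + ∑ l, c l := by
  simp [dominoPos]

theorem dominoPos_succ_add_two_le (i : ℕ) : dominoPos R c (i + 1) + 2 ≤ dominoPos R c i := by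
  rcases lt_or_ge i b with hi | hi
  · have := dominoPos_of_lt R c ⟨i, hi⟩
    simp only at this
    omega
  · rw [dominoPos_of_le R c hi, dominoPos_of_le R c (hi.trans i.le_succ)]
    omega

theorem strictAnti_dominoPos : StrictAnti (dominoPos R c) :=
  strictAnti_nat_of_succ_lt fun i => by
    have := dominoPos_succ_add_two_le R c i
    omega

theorem dominoPos_mem_Icc {m : ℕ} (hc : ∑ l, c l ≤ m) (i : Fin b) :
    dominoPos R c i ∈ Icc (R + 1 - 2 * b) (R - 1 + m) := by
  have hle : dominoPos R c i ≤ dominoPos R c 0 :=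
    (strictAnti_dominoPos R c).antitone (Nat.zero_le i)
  have hge : dominoPos R c (b - 1 + 1) + 2 ≤ dominoPos R c i :=
    (dominoPos_succ_add_two_le R c (b - 1)).trans
      ((strictAnti_dominoPos R c).antitone (by omega))
  rw [dominoPos_zero] at hle
  rw [Nat.sub_add_cancel i.pos, dominoPos_of_le R c le_rfl] at hge
  rw [mem_Icc]
  omega

theorem dominoPos_injective :
    Function.Injective fun (c : Fin b → ℕ) (i : Fin b) => dominoPos R c i := by
  intro c c' h
  have hpos : ∀ i, dominoPos R c i = dominoPos R c' i := fun i => by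
    rcases lt_or_ge i b with hi | hi
    · exact congrFun h ⟨i, hi⟩
    · rw [dominoPos_of_le R c hi, dominoPos_of_le R c' hi]
  ext i
  have hc := dominoPos_of_lt R c i
  have hc' := dominoPos_of_lt R c' i
  rw [hpos, hpos] at hc
  omega

theorem exists_dominoPos_eq {P : ℕ → ℤ} (hP : ∀ i < b, P (i + 1) + 2 ≤ P i)
    (hPb : P b = R - 1 - 2 * b) : ∃ c : Fin b → ℕ, ∀ i ≤ b, dominoPos R c i = P i := by
  refine ⟨fun l => (P l - P (l + 1) - 2).toNat, fun i hi => ?_⟩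
  induction hi using Nat.decreasingInduction with
  | self => rw [dominoPos_of_le R _ le_rfl, hPb]
  | of_succ i hi ih =>
    have hstep := dominoPos_of_lt R (fun l : Fin b => (P l - P (l + 1) - 2).toNat) ⟨i, hi⟩
    have hgap := hP i hi
    simp only [ih] at hstep
    omega

theorem exists_dominoPos_eq_of_strictAnti {m : ℕ} {p : Fin b → ℤ} (hanti : StrictAnti p)
    (hgap : ∀ i j, p i + 1 ≠ p j) (hp : ∀ i, p i ∈ Icc (R + 1 - 2 * b) (R - 1 + m)) :
    ∃ c : Fin b → ℕ, ∑ l, c l ≤ m ∧ (fun i : Fin b => dominoPos R c i) = p := by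
  simp only [mem_Icc] at hp
  obtain ⟨c, hc⟩ := exists_dominoPos_eq (b := b) R
    (P := fun i => if h : i < b then p ⟨i, h⟩ else R - 1 - 2 * i) (fun i hi => by
      have hpi := hp ⟨i, hi⟩
      rcases lt_or_ge (i + 1) b with hi' | hi'
      · have hlt := hanti (show (⟨i, hi⟩ : Fin b) < ⟨i + 1, hi'⟩ by simp)
        have hne := hgap ⟨i + 1, hi'⟩ ⟨i, hi⟩
        simp only [dif_pos hi, dif_pos hi']
        omega
      · simp only [dif_pos hi, dif_neg hi'.not_gt]
        omega) (by simp)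
  have hpos : (fun i : Fin b => dominoPos R c i) = p := by
    ext i
    simpa using hc i i.2.le
  refine ⟨c, ?_, hpos⟩
  rcases b.eq_zero_or_pos with rfl | hb
  · simp
  · have htop := (hp ⟨0, hb⟩).2
    simp only [← hpos, dominoPos_zero] at htop
    omega

open scoped Classical in
theorem sum_strictAnti_eq_sum_dominoPos {M : Type*} [AddCommMonoid M] {T : (Fin b → ℤ) → M}
    (hT : ∀ p i j, p i + 1 = p j → T p = 0) (m : ℕ) :
    ∑ p ∈ Fintype.piFinset (fun _ => Icc (R + 1 - 2 * b) (R - 1 + m)) with StrictAnti p, T p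
      = ∑ c ∈ (Fintype.piFinset fun _ : Fin b => range (m + 1)).filter (fun c => ∑ i, c i ≤ m),
        T (fun i => dominoPos R c i) := by
  symm
  refine sum_of_injOn (fun c i => dominoPos R c i) (dominoPos_injective R).injOn ?_ ?_
    fun _ _ => rfl
  · intro c hc
    simp only [coe_filter, Fintype.mem_piFinset, Set.mem_ofPred_eq] at hc ⊢
    exact ⟨dominoPos_mem_Icc R c hc.2,
      (strictAnti_dominoPos R c).comp_strictMono Fin.val_strictMono⟩
  · intro p hp hnot
    by_contra hne
    simp only [mem_filter, Fintype.mem_piFinset] at hp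
    obtain ⟨c, hc, rfl⟩ := exists_dominoPos_eq_of_strictAnti R hp.2
      (fun i j h => hne (hT p i j h)) hp.1
    refine hnot ⟨c, ?_, rfl⟩
    simp only [coe_filter, Fintype.mem_piFinset, mem_range, Set.mem_ofPred_eq]
    exact ⟨fun i => Nat.lt_succ_of_le
      ((single_le_sum_of_canonicallyOrdered (mem_univ i)).trans hc), hc⟩

end DominoPos

section Cancellation

open Finset

variable {ι X M : Type*} [Fintype ι] [DecidableEq ι] [AddCommGroup M] [IsAddTorsionFree M]
  {F : (ι → X) → M} {b m : ℕ} {R N : ℤ} {x : ℤ → X} {τ : ι → X}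

theorem IsSkewSymmetric.sum_dominoFamily_eq_zero (hF : IsSkewSymmetric F) (hb : 0 < b)
    (d : Fin b × Fin 2 ↪ ι) (hx : ∀ s, x (N - 1 - s) = x s) (hN : 2 * R + m ≤ N + 2 * b)
    (hτ : ∀ p, R - 1 ≤ p → p < N - (R - 1 + m) →
      ∃ l ∉ Set.range d, x p = τ l ∨ x (p - 1) = τ l) :
    ∑ c ∈ (Fintype.piFinset fun _ : Fin b => range (m + 1)).filter (fun c => ∑ i, c i ≤ m),
      F (dominoFamily x d τ fun i => dominoPos R c i) = 0 := by
  classical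
  set T : (Fin b → ℤ) → M := fun p => F (dominoFamily x d τ p)
  set U := Icc (R + 1 - 2 * b) (R - 1 + m)
  have hinj : ∀ p, ¬ Function.Injective p → T p = 0 := fun p hp => by
    obtain ⟨i, j, hpij, hij⟩ := Function.not_injective_iff.1 hp
    exact hF.dominoFamily_eq_zero_of_eq x d τ hij hpij
  have hadj : ∀ p i j, p i + 1 = p j → T p = 0 := fun p i j =>
    hF.dominoFamily_eq_zero_of_add_one_eq x d τ
  have hlow : ∀ p ∈ Fintype.piFinset fun _ => {s ∈ U | N - s ∉ U}, T p = 0 := fun p hp => by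
    simp only [Fintype.mem_piFinset, mem_filter, U, mem_Icc] at hp
    by_cases hwin : ∀ i, R + 1 - 2 * b ≤ p i ∧ p i < R + 1 - 2 * b + 2 * (b - 1)
    · obtain ⟨i, j, hij, h | h⟩ := exists_ne_eq_or_add_one_eq hb hwin
      · exact hF.dominoFamily_eq_zero_of_eq x d τ hij h
      · exact hadj p i j h
    · -- Some top lies above the window, and its mirror image lies above `U`.
      push Not at hwin
      obtain ⟨i, hi⟩ := hwin
      have hpi := hp i
      obtain ⟨l, hl, h | h⟩ := hτ (p i) (by omega) (by omega)
      · exact hF.dominoFamily_eq_zero_of_notMem x d (i := i) (ε := 0) hl (by simpa using h)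
      · exact hF.dominoFamily_eq_zero_of_notMem x d (i := i) (ε := 1) hl (by simpa using h)
  have hsum := sum_piFinset_eq_sum_piFinset_filter_notMem (T := T) (sub_sub_cancel N)
    (hF.dominoFamily_update_sub hx d τ) U
  rw [sum_eq_zero hlow, sum_piFinset_eq_factorial_smul_sum_strictAnti
    (hF.dominoFamily_comp_perm x d τ) hinj, sum_strictAnti_eq_sum_dominoPos R hadj m] at hsum
  exact (smul_eq_zero_iff_right b.factorial_ne_zero).1 hsum

end Cancellation

section QuantumDimension

open Finset Real

theorem prod_filter_lt_Icc_one {M : Type*} [CommMonoid M] (g : ℕ → ℕ → M) (n : ℕ) :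
    ∏ p ∈ (Icc 1 n ×ˢ Icc 1 n).filter (fun p => p.1 < p.2), g p.1 p.2
      = ∏ i : Fin n, ∏ j ∈ Ioi i, g (i + 1) (j + 1) := by
  have hIcc (f : ℕ → M) : ∏ i ∈ Icc 1 n, f i = ∏ i : Fin n, f (i + 1) := by
    rw [← prod_range (fun i => f (i + 1)), range_eq_Ico, prod_Ico_add' f 0 n 1]
    rfl
  rw [prod_filter, prod_product, hIcc]
  refine prod_congr rfl fun i _ => ?_
  rw [hIcc, ← filter_lt_eq_Ioi, prod_filter]
  simp only [add_lt_add_iff_right, Fin.lt_def]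

theorem sin_sub_mul_sin_add (x z : ℝ) : sin (x - z) * sin (x + z) = cos z ^ 2 - cos x ^ 2 := by
  rw [sin_sub, sin_add]
  linear_combination cos z ^ 2 * sin_sq_add_cos_sq x - cos x ^ 2 * sin_sq_add_cos_sq z

/-- The Vandermonde node `cos² (π s / n)` attached to the orthogonal coordinate `s`; differences of
nodes are the products `sin (π (s - t) / n) * sin (π (s + t) / n)` entering the type `D` quantum
dimension. -/
noncomputable def cosSqNode (n s : ℝ) : ℝ :=
  cos (π * s / n) ^ 2

theorem cosSqNode_sub_cosSqNode (n s t : ℝ) :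
    cosSqNode n t - cosSqNode n s = sin (π * (s - t) / n) * sin (π * (s + t) / n) := by
  rw [mul_sub, sub_div, mul_add, add_div, sin_sub_mul_sin_add, cosSqNode, cosSqNode]

theorem cosSqNode_self_sub {n : ℝ} (hn : n ≠ 0) (s : ℝ) :
    cosSqNode n (n - s) = cosSqNode n s := by
  rw [cosSqNode, mul_sub, sub_div, mul_div_cancel_right₀ _ hn, cos_pi_sub, neg_sq, cosSqNode]

theorem qdimD_eq_det_div_det (r k : ℕ) (lam : ℕ → ℤ) :
    qdimD r k lam =
      (Matrix.vandermonde fun i : Fin r => cosSqNode (2 * r - 2 + k) (uCoord r lam (i + 1))).det /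
      (Matrix.vandermonde fun i : Fin r => cosSqNode (2 * r - 2 + k) (r - (i + 1))).det := by
  simp only [Matrix.det_vandermonde, cosSqNode_sub_cosSqNode, qdimD, prod_div_distrib]
  congr 1
  · exact prod_filter_lt_Icc_one (fun i j : ℕ =>
      sin (π * (uCoord r lam i - uCoord r lam j) / (2 * r - 2 + k)) *
      sin (π * (uCoord r lam i + uCoord r lam j) / (2 * r - 2 + k))) r
  · rw [prod_filter_lt_Icc_one (fun i j : ℕ => sin (π * ((j : ℝ) - i) / (2 * r - 2 + k)) *
      sin (π * (2 * (r : ℝ) - i - j) / (2 * r - 2 + k)))]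
    refine prod_congr rfl fun i _ => prod_congr rfl fun j _ => ?_
    push_cast
    ring_nf

theorem two_mul_sub_two_add_ne_zero {r : ℕ} (hr : 2 ≤ r) (k : ℕ) :
    2 * (r : ℝ) - 2 + k ≠ 0 := by
  have hr' : (2 : ℝ) ≤ r := by exact_mod_cast hr
  linarith

theorem qdimD_eq_zero_of_uCoord_add_eq {r k : ℕ} {lam : ℕ → ℤ} {i j : ℕ}
    (hi : 1 ≤ i) (hij : i < j) (hj : j ≤ r)
    (h : uCoord r lam i + uCoord r lam j = 2 * r - 2 + k) : qdimD r k lam = 0 := by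
  refine prod_eq_zero (i := (i, j)) (mem_filter.2 ⟨?_, hij⟩) ?_
  · simp only [mem_product, mem_Icc]
    omega
  · rw [h, mul_div_cancel_right₀ _ (two_mul_sub_two_add_ne_zero (by omega) k), sin_pi, mul_zero,
      zero_div]

theorem uCoord_sum_ite {r b o : ℕ} (hr : 2 * b + o ≤ r) (c : Fin b → ℕ) (i : ℕ) :
    uCoord r (fun j => ∑ l : Fin b, if j = 2 * (l : ℕ) + o then (c l : ℤ) else 0) i
      = ((∑ l : Fin b, if i ≤ 2 * (l : ℕ) + o then (c l : ℤ) else 0) + (r - i) : ℤ) := by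
  have hspin : ∀ j, r - 1 ≤ j →
      ∑ l : Fin b, (if j = 2 * (l : ℕ) + o then (c l : ℤ) else 0) = 0 := fun j hj =>
    sum_eq_zero fun l _ => if_neg (by omega)
  have htail : ∑ j ∈ Icc i (r - 2), ∑ l : Fin b, (if j = 2 * (l : ℕ) + o then (c l : ℤ) else 0)
      = ∑ l : Fin b, if i ≤ 2 * (l : ℕ) + o then (c l : ℤ) else 0 := by
    rw [sum_comm]
    refine sum_congr rfl fun l _ => ?_
    simp [show 2 * (l : ℕ) + o ≤ r - 2 by omega]
  rw [uCoord, hspin _ le_rfl, hspin _ (Nat.sub_le r 1), ← Int.cast_sum, htail]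
  split_ifs with hi
  · rw [sum_eq_zero fun l _ => if_neg (by omega), hi]
    simp
  · push_cast
    ring

theorem uCoord_sum_ite_cons {r b : ℕ} (hbr : 2 * b + 3 ≤ r) (m : ℕ) (c : Fin b → ℕ) (i : ℕ) :
    uCoord r (fun j => ∑ l : Fin (b + 1), if j = 2 * (l : ℕ) + 1 then
        ((Fin.cons m c : Fin (b + 1) → ℕ) l : ℤ) else 0) (i + 1)
      = ((if i = 0 then (m : ℤ) else 0)
        + (∑ l : Fin b, if i ≤ 2 * (l : ℕ) + 2 then (c l : ℤ) else 0) + (r - (i + 1)) : ℤ) := by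
  have h := uCoord_sum_ite (b := b + 1) (o := 1) hbr (Fin.cons m c) (i + 1)
  rw [h, Fin.sum_univ_succ]
  simp [mul_add]

theorem uCoord_ite_spin {r a i : ℕ} (m : ℕ) (ha : a = r - 1 ∨ a = r) (hi : 1 ≤ i)
    (hir : i < r) :
    uCoord r (fun j => if j = a then (m : ℤ) else 0) i = m / 2 + (r - i) := by
  have hvector : ∑ j ∈ Icc i (r - 2), (((if j = a then (m : ℤ) else 0 : ℤ)) : ℝ) = 0 :=
    sum_eq_zero fun j hj => by
      rw [mem_Icc] at hj
      rw [if_neg (by omega), Int.cast_zero]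
  rw [uCoord, if_neg (by omega), hvector]
  rcases ha with rfl | rfl
  · simp [show r ≠ r - 1 by omega]
  · simp [show a - 1 ≠ a by omega]

theorem cosSqNode_uCoord_eq_dominoFamily {r b o : ℕ} (ho : 2 * b + o ≤ r) (n : ℝ)
    {lam : ℕ → ℤ} {p : Fin b → ℤ} {τ : ℕ → ℤ}
    (hdomino : ∀ (i : Fin b) (ε : Fin 2),
      uCoord r lam (2 * i + ε + o + 1) = (p i - (ε : ℕ) : ℤ))
    (hrest : ∀ l, l < o ∨ 2 * b + o ≤ l → uCoord r lam (l + 1) = τ l) :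
    (fun i : Fin r => cosSqNode n (uCoord r lam (i + 1)))
      = dominoFamily (fun s : ℤ => cosSqNode n s) (dominoSlot ho)
          (fun l => cosSqNode n (τ l)) p := by
  ext l
  by_cases hl : l ∈ Set.range (dominoSlot ho)
  · obtain ⟨⟨i, ε⟩, rfl⟩ := hl
    rw [dominoFamily_apply, dominoSlot_apply, hdomino]
  · rw [dominoFamily_apply_of_notMem _ _ _ _ hl, hrest]
    rw [mem_range_dominoSlot] at hl
    omega

theorem sum_qdimD_eq_zero {r k b o : ℕ} (hb : 0 < b) (ho : 2 * b + o ≤ r)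
    {lam : (Fin b → ℕ) → ℕ → ℤ} {τ : ℕ → ℤ}
    (hdomino : ∀ c, ∑ i, c i ≤ k + 1 → ∀ (i : Fin b) (ε : Fin 2),
      uCoord r (lam c) (2 * i + ε + o + 1) = (dominoPos (r - o) c i - (ε : ℕ) : ℤ))
    (hrest : ∀ c, ∑ i, c i ≤ k + 1 → ∀ l, l < o ∨ 2 * b + o ≤ l →
      uCoord r (lam c) (l + 1) = τ l)
    (hτ : ∀ p : ℤ, r - o - 1 ≤ p → p < r + o - 1 → ∃ l < r, (l < o ∨ 2 * b + o ≤ l) ∧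
      (cosSqNode (2 * r - 2 + k) p = cosSqNode (2 * r - 2 + k) (τ l) ∨
        cosSqNode (2 * r - 2 + k) (p - 1) = cosSqNode (2 * r - 2 + k) (τ l))) :
    ∑ c ∈ (Fintype.piFinset fun _ : Fin b => range (k + 1 + 1)).filter
      (fun c => ∑ i, c i ≤ k + 1), qdimD r k (lam c) = 0 := by
  set n : ℝ := 2 * r - 2 + k with hn
  have hn0 : n ≠ 0 := two_mul_sub_two_add_ne_zero (by omega) k
  have hsum := (isSkewSymmetric_det_vandermonde r).sum_dominoFamily_eq_zero hb (dominoSlot ho)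
    (x := fun s : ℤ => cosSqNode n s) (τ := fun l : Fin r => cosSqNode n (τ l))
    (N := 2 * r - 1 + k) (R := r - o) (m := k + 1)
    (fun s => by
      rw [← cosSqNode_self_sub hn0, hn]
      push_cast
      ring_nf)
    (by push_cast; omega) (fun p hp hp' => by
      obtain ⟨l, hlr, hl, h⟩ := hτ p (by omega) (by push_cast at hp'; omega)
      refine ⟨⟨l, hlr⟩, ?_, by push_cast; exact h⟩
      rw [mem_range_dominoSlot]
      simp only
      omega)
  rw [sum_congr rfl fun c hc => by
    rw [qdimD_eq_det_div_det, cosSqNode_uCoord_eq_dominoFamily ho _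
      (hdomino c (mem_filter.1 hc).2) (hrest c (mem_filter.1 hc).2)], ← sum_div, hsum, zero_div]

end QuantumDimension

section KirillovReshetikhin

open Finset Real

theorem zD_spin_eq_zero {r k a : ℕ} (hr : 3 ≤ r) (ha : a = r - 1 ∨ a = r) :
    zD r k a (k + 1) = 0 := by
  rw [zD, if_pos ha]
  refine qdimD_eq_zero_of_uCoord_add_eq le_rfl one_lt_two (by omega) ?_
  rw [uCoord_ite_spin _ ha le_rfl (by omega), uCoord_ite_spin _ ha one_le_two (by omega)]
  push_cast
  ring

theorem zD_one_eq_zero {r k : ℕ} (hr : 3 ≤ r) : zD r k 1 (k + 1) = 0 := by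
  rw [zD, if_neg (by omega), if_pos rfl]
  refine sum_eq_zero fun c hc => ?_
  have hc0 : c 0 = k + 1 := by simpa using (mem_filter.1 hc).2
  refine qdimD_eq_zero_of_uCoord_add_eq le_rfl one_lt_two (by omega) ?_
  rw [uCoord_sum_ite (by omega), uCoord_sum_ite (by omega)]
  simp only [Nat.reduceAdd, Nat.reduceDiv, univ_unique, Fin.default_eq_zero, Fin.val_zero,
    sum_singleton, hc0, mul_zero, zero_add, le_refl, ↓reduceIte, Nat.not_ofNat_le_one]
  push_cast
  ring

theorem zD_even_eq_zero {r k b : ℕ} (hb : 0 < b) (hbr : 2 * b + 2 ≤ r) :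
    zD r k (2 * b) (k + 1) = 0 := by
  rw [zD, if_neg (by omega), if_neg (by omega), Nat.mul_div_cancel_left b two_pos]
  refine sum_qdimD_eq_zero (o := 0) (τ := fun l => r - 1 - l) hb (by omega) ?_ ?_ ?_
  · intro c _ i ε
    rw [uCoord_sum_ite hbr, dominoPos, sum_congr rfl fun (l : Fin b) _ => if_congr
      (show 2 * (i : ℕ) + ε + 0 + 1 ≤ 2 * (l : ℕ) + 2 ↔ i ≤ (l : ℕ) by omega) rfl rfl]
    push_cast
    ring
  · intro c _ l hl
    rw [uCoord_sum_ite hbr, sum_eq_zero fun i _ => if_neg (by omega)]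
    push_cast
    ring
  · intro p hp hp'
    omega

theorem zD_odd_eq_zero {r k b : ℕ} (hb : 0 < b) (hbr : 2 * b + 3 ≤ r) :
    zD r k (2 * b + 1) (k + 1) = 0 := by
  rw [zD, if_neg (by omega), if_pos (by omega), show (2 * b + 1 + 1) / 2 = b + 1 by omega,
    sum_composition_eq_sum_tail]
  refine sum_qdimD_eq_zero (o := 1) (τ := fun l => if l = 0 then r + k else r - 1 - l) hb
    (by omega) ?_ ?_ ?_
  · intro c _ i ε
    rw [uCoord_sum_ite_cons hbr, dominoPos, if_neg (by omega),
      sum_congr rfl fun (l : Fin b) _ => if_congr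
        (show 2 * (i : ℕ) + ε + 1 ≤ 2 * (l : ℕ) + 2 ↔ i ≤ (l : ℕ) by omega) rfl rfl]
    push_cast
    ring
  · intro c hc l hl
    rw [uCoord_sum_ite_cons hbr]
    rcases hl with hl | hl
    · obtain rfl : l = 0 := by omega
      simp only [↓reduceIte, zero_le, Nat.cast_sub hc]
      push_cast
      ring
    · rw [sum_eq_zero fun i _ => if_neg (by omega), if_neg (by omega), if_neg (by omega)]
      push_cast
      ring
  · intro p hp hp'
    have hreflect :=
      cosSqNode_self_sub (two_mul_sub_two_add_ne_zero (r := r) (by omega) k) (r - 2)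
    have hmirror : 2 * (r : ℝ) - 2 + k - (r - 2) = r + k := by ring
    refine ⟨0, by omega, by omega, ?_⟩
    obtain rfl | rfl : p = r - 2 ∨ p = r - 1 := by omega
    · left
      simp [← hreflect, hmirror]
    · right
      simp [← hreflect, hmirror, sub_sub, one_add_one_eq_two]

end KirillovReshetikhin

/-- The quantum dimension solution of type `D_r` satisfies `z^{(a)}_{k+1} = 0`. -/
theorem stmt13 (r k : ℕ) (hr : 4 ≤ r) (hk : 1 ≤ k)
    (a : ℕ) (ha : a ∈ Finset.Icc 1 r) :
    zD r k a (k + 1) = 0 := by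
  rw [Finset.mem_Icc] at ha
  by_cases hspin : a = r - 1 ∨ a = r
  · exact zD_spin_eq_zero (by omega) hspin
  obtain ⟨b, rfl | rfl⟩ := Nat.even_or_odd' a
  · exact zD_even_eq_zero (by omega) (by omega)
  rcases b.eq_zero_or_pos with rfl | hb
  · exact zD_one_eq_zero (by omega)
  · exact zD_odd_eq_zero hb (by omega)
end

section
/- The quantum dimension solution of type D_r satisfies z^{(a)}_{k+h} = 1 for every a with 1 ≤ a ≤ r−2; moreover z^{(r−1)}_{k+h} = z^{(r)}_{k+h} and this common value equals 1 or −1. -/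
/-!
In the coordinates `x_i = cos (2π u_i(λ) / (h + k))` the quantum dimension of `λ` is the
Vandermonde determinant of `x_1, …, x_r` divided by its value at `λ = 0`. Up to this constant it is
therefore the wedge `e_{u_1} ∧ ⋯ ∧ e_{u_r}` of the rows `e_p = (1, x, x², …)`, where
`x = cos (2π p / (h + k))`.

For `a ≤ r - 2` the weights `λ` occurring in `z^{(a)}_m` have their first `a` coordinates grouped in
pairs `p + 1, p`, except for `u_1 = m + r - 1` when `a` is odd, and the other coordinates do not
depend on `λ`. So `z^{(a)}_m` is governed by a sum of products of bivectors `ω_p = e_{p+1} ∧ e_p`.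
These commute and satisfy `ω_p ω_p = ω_{p+1} ω_p = 0`, which makes the sum a divided power of a
partial sum of the `ω_p`, of length growing with `m`. As `e` is even and has period `h + k`, the
reflection `p ↦ h + k - p` shows that `ω` sums to zero over a period. Hence `z^{(a)}_m` has period
`h + k` in `m`.

For the spin nodes, adding `h + k` to `m` shifts every `u_i` by half a period, up to the sign of
`u_r`, and so negates every `x_i`.
-/

section GappedSums

variable {E : Type*} [Semiring E]

theorem add_pow_succ_of_mul_self_eq_zero {x y : E} (h : Commute x y) (hy : y * y = 0) (s : ℕ) :
    (x + y) ^ (s + 1) = x ^ (s + 1) + (s + 1) • (y * x ^ s) := by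
  induction s with
  | zero => simp
  | succ s ih =>
    have hy' : y * x ^ s * y = 0 := by
      rw [mul_assoc, (h.pow_left s).eq, ← mul_assoc, hy, zero_mul]
    rw [pow_succ, ih, add_mul, mul_add, mul_add, smul_mul_assoc, smul_mul_assoc, hy', smul_zero,
      add_zero, mul_assoc, ← pow_succ, ← pow_succ, (h.pow_left _).eq, add_assoc,
      succ_nsmul _ (s + 1), add_comm (y * _)]

/-- The sum of the products `ω p₁ * ⋯ * ω p_s` over all sequences with `p₁ ≤ m + 2 * s - 2` and
`0 ≤ p_s` whose consecutive terms decrease by at least two. In the recursion, `b` is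
`p₁ - 2 * (s - 1)`. -/
def gappedSum (ω : ℕ → E) : ℕ → ℕ → E
  | 0, _ => 1
  | s + 1, m => ∑ b ∈ Finset.range (m + 1), ω (b + 2 * s) * gappedSum ω s b

/-- Commuting square-zero elements whose neighbours annihilate each other, so that only the products
over index sets with gaps of at least two can be nonzero. -/
structure IsGapped (ω : ℕ → E) : Prop where
  commute : ∀ p q, Commute (ω p) (ω q)
  mul_self : ∀ p, ω p * ω p = 0
  succ_mul : ∀ p, ω (p + 1) * ω p = 0

namespace IsGapped

variable {ω : ℕ → E}

theorem shift (hω : IsGapped ω) (n : ℕ) : IsGapped fun p => ω (n + p) where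
  commute _ _ := hω.commute _ _
  mul_self _ := hω.mul_self _
  succ_mul _ := hω.succ_mul _

theorem sum_range_succ_pow (hω : IsGapped ω) (n s : ℕ) :
    (∑ p ∈ Finset.range (n + 1), ω p) ^ (s + 1) = (∑ p ∈ Finset.range n, ω p) ^ (s + 1) +
      (s + 1) • (ω n * (∑ p ∈ Finset.range n, ω p) ^ s) := by
  rw [Finset.sum_range_succ]
  exact add_pow_succ_of_mul_self_eq_zero (Commute.sum_left _ _ _ fun p _ => hω.commute p n)
    (hω.mul_self n) s

theorem mul_sum_range_pow (hω : IsGapped ω) (n s : ℕ) :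
    ω n * (∑ p ∈ Finset.range n, ω p) ^ s = ω n * (∑ p ∈ Finset.range (n - 1), ω p) ^ s := by
  rcases n with - | n
  · rfl
  rcases s with - | s
  · simp
  rw [Nat.add_sub_cancel, hω.sum_range_succ_pow, mul_add, mul_smul_comm, ← mul_assoc (ω (n + 1)),
    hω.succ_mul, zero_mul, smul_zero, add_zero]

theorem sum_range_two_mul_pow_succ (hω : IsGapped ω) (s : ℕ) :
    (∑ p ∈ Finset.range (2 * s), ω p) ^ (s + 1) = 0 := by
  induction s with
  | zero => simp
  | succ s ih =>
    rw [show 2 * (s + 1) = 2 * s + 1 + 1 by ring, hω.sum_range_succ_pow, hω.mul_sum_range_pow,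
      hω.sum_range_succ_pow, pow_succ _ (s + 1), Nat.add_sub_cancel, ih]
    simp

theorem factorial_nsmul_gappedSum (hω : IsGapped ω) (s m : ℕ) :
    s.factorial • gappedSum ω s m = (∑ p ∈ Finset.range (m + 2 * s - 1), ω p) ^ s := by
  induction s generalizing m with
  | zero => simp [gappedSum]
  | succ s ih =>
    have summand (b : ℕ) : (s + 1).factorial • (ω (b + 2 * s) * gappedSum ω s b) =
        (s + 1) • (ω (b + 2 * s) * (∑ p ∈ Finset.range (b + 2 * s), ω p) ^ s) := by
      rw [hω.mul_sum_range_pow, ← ih, mul_smul_comm, smul_smul, Nat.factorial_succ]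
    rw [gappedSum, Finset.smul_sum, Finset.sum_congr rfl fun b _ => summand b]
    induction m with
    | zero =>
      rw [show 0 + 2 * (s + 1) - 1 = 2 * s + 1 by omega, hω.sum_range_succ_pow,
        hω.sum_range_two_mul_pow_succ]
      simp
    | succ m ihm =>
      rw [Finset.sum_range_succ, ihm, show m + 1 + 2 * (s + 1) - 1 = m + 1 + 2 * s + 1 by omega,
        hω.sum_range_succ_pow, show m + 2 * (s + 1) - 1 = m + 1 + 2 * s by omega]

theorem gappedSum_add_period [IsAddTorsionFree E] (hω : IsGapped ω) {N : ℕ}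
    (hper : ∀ t, ∑ p ∈ Finset.range N, ω (t + p) = 0) (s m : ℕ) :
    gappedSum ω s (m + N) = gappedSum ω s m := by
  rcases s with - | s
  · rfl
  refine nsmul_right_injective (s + 1).factorial_ne_zero ?_
  dsimp only
  rw [hω.factorial_nsmul_gappedSum, hω.factorial_nsmul_gappedSum,
    show m + N + 2 * (s + 1) - 1 = m + 2 * (s + 1) - 1 + N by omega, Finset.sum_range_add, hper,
    add_zero]

end IsGapped

end GappedSums

section Tuples

open Finset.Nat (antidiagonalTuple mem_antidiagonalTuple antidiagonalTuple_zero_zero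
  antidiagonalTuple_zero_succ)

variable {s : ℕ}

/-- The tail `c j + c (j + 1) + ⋯` of the total of `c`: the amount by which
`λ = ∑ i, c i • ω_{d+2i}` raises the coordinates of `λ + ρ` number `d + 2 * j - 1` and
`d + 2 * j`. -/
def tailSum (c : Fin s → ℕ) (j : ℕ) : ℕ := ∑ i : Fin s, if j ≤ i then c i else 0

theorem tailSum_zero (c : Fin s → ℕ) : tailSum c 0 = ∑ i, c i := by simp [tailSum]

theorem tailSum_eq_zero (c : Fin s → ℕ) {j : ℕ} (h : s ≤ j) : tailSum c j = 0 :=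
  Finset.sum_eq_zero fun i _ => if_neg (by omega)

theorem tailSum_cons_succ (x : ℕ) (c : Fin s → ℕ) (j : ℕ) :
    tailSum (Fin.cons x c : Fin (s + 1) → ℕ) (j + 1) = tailSum c j := by
  simp [tailSum, Fin.sum_univ_succ]

theorem filter_sum_eq_antidiagonalTuple (s m : ℕ) :
    (Fintype.piFinset fun _ : Fin s => Finset.range (m + 1)).filter (fun c => ∑ i, c i = m) =
      antidiagonalTuple s m := by
  ext c
  simp only [Finset.mem_filter, Fintype.mem_piFinset, Finset.mem_range, mem_antidiagonalTuple,
    and_iff_right_iff_imp, Nat.lt_succ_iff]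
  rintro rfl i
  exact Finset.single_le_sum (fun _ _ => Nat.zero_le _) (Finset.mem_univ i)

variable {E : Type*}

theorem sum_filter_sum_le [AddCommMonoid E] (s m : ℕ) (f : (Fin s → ℕ) → E) :
    ∑ c ∈ (Fintype.piFinset fun _ : Fin s => Finset.range (m + 1)).filter (fun c => ∑ i, c i ≤ m),
      f c = ∑ b ∈ Finset.range (m + 1), ∑ c ∈ antidiagonalTuple s b, f c := by
  have filter_eq : (Fintype.piFinset fun _ : Fin s => Finset.range (m + 1)).filter
      (fun c => ∑ i, c i ≤ m) = (Finset.range (m + 1)).biUnion (antidiagonalTuple s) := by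
    ext c
    simp only [Finset.mem_filter, Fintype.mem_piFinset, Finset.mem_range_succ_iff,
      Finset.mem_biUnion, mem_antidiagonalTuple, exists_eq_right', and_iff_right_iff_imp]
    exact fun h i => (Finset.single_le_sum (fun _ _ => Nat.zero_le _) (Finset.mem_univ i)).trans h
  rw [filter_eq, Finset.sum_biUnion]
  exact fun b _ b' _ hne => Finset.disjoint_left.2 fun c hc hc' =>
    hne ((mem_antidiagonalTuple.1 hc).symm.trans (mem_antidiagonalTuple.1 hc'))

theorem sum_antidiagonalTuple_succ [AddCommMonoid E] (s m : ℕ) (f : (Fin (s + 1) → ℕ) → E) :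
    ∑ c ∈ antidiagonalTuple (s + 1) m, f c =
      ∑ b ∈ Finset.range (m + 1), ∑ c ∈ antidiagonalTuple s b, f (Fin.cons (m - b) c) := by
  have head_eq {c : Fin (s + 1) → ℕ} (hc : c ∈ antidiagonalTuple (s + 1) m) :
      m - ∑ i, Fin.tail c i = c 0 := by
    rw [mem_antidiagonalTuple, Fin.sum_univ_succ] at hc
    exact Nat.sub_eq_of_eq_add hc.symm
  rw [Finset.sum_sigma']
  refine Finset.sum_bij' (fun c _ => ⟨∑ i, Fin.tail c i, Fin.tail c⟩)
    (fun x _ => Fin.cons (m - x.1) x.2) ?_ ?_ ?_ ?_ ?_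
  · intro c hc
    rw [mem_antidiagonalTuple, Fin.sum_univ_succ] at hc
    rw [Finset.mem_sigma, Finset.mem_range_succ_iff, mem_antidiagonalTuple]
    exact ⟨hc ▸ Nat.le_add_left _ _, rfl⟩
  · rintro ⟨b, c⟩ hx
    rw [Finset.mem_sigma, Finset.mem_range_succ_iff, mem_antidiagonalTuple] at hx
    rw [mem_antidiagonalTuple, Fin.sum_univ_succ]
    simp only [Fin.cons_zero, Fin.cons_succ]
    rw [hx.2, Nat.sub_add_cancel hx.1]
  · intro c hc
    simp only [head_eq hc, Fin.cons_self_tail]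
  · rintro ⟨b, c⟩ hx
    rw [Finset.mem_sigma, mem_antidiagonalTuple] at hx
    obtain ⟨-, rfl⟩ : _ ∧ ∑ i, c i = b := hx
    simp
  · intro c hc
    simp only [head_eq hc, Fin.cons_self_tail]

theorem sum_antidiagonalTuple_prod_eq_gappedSum [Semiring E] (ω : ℕ → E) (s m : ℕ) :
    ∑ b ∈ Finset.range (m + 1), ∑ c ∈ antidiagonalTuple s b,
      ((List.range s).map fun j => ω (tailSum c j + 2 * (s - 1 - j))).prod = gappedSum ω s m := by
  induction s generalizing m with
  | zero => simp [gappedSum, Finset.sum_range_succ']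
  | succ s ih =>
    rw [gappedSum]
    refine Finset.sum_congr rfl fun b _ => ?_
    rw [sum_antidiagonalTuple_succ, ← ih, Finset.mul_sum]
    refine Finset.sum_congr rfl fun b' hb' => ?_
    rw [Finset.mul_sum]
    refine Finset.sum_congr rfl fun c hc => ?_
    have total : b - b' + ∑ i, c i = b := by
      rw [mem_antidiagonalTuple.1 hc, Nat.sub_add_cancel (Finset.mem_range_succ_iff.1 hb')]
    rw [List.prod_range_succ', tailSum_zero, Fin.sum_univ_succ]
    simp only [Fin.cons_zero, Fin.cons_succ, tailSum_cons_succ, total, Nat.add_sub_cancel,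
      Nat.sub_zero, Nat.sub_sub, Nat.add_comm 1]

end Tuples

theorem sum_range_add_of_periodic {A : Type*} [AddCommMonoid A] {f : ℕ → A} {N : ℕ}
    (hf : Function.Periodic f N) (t : ℕ) :
    ∑ p ∈ Finset.range N, f (t + p) = ∑ p ∈ Finset.range N, f p := by
  rcases N with - | N
  · simp
  induction t with
  | zero => simp
  | succ t ih =>
    rw [← ih, Finset.sum_range_succ, Finset.sum_range_succ', add_assoc t 1 N, add_comm 1 N, hf t,
      add_zero]
    simp only [add_assoc, add_comm 1]

section Exterior

open ExteriorAlgebra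
open Finset.Nat (antidiagonalTuple mem_antidiagonalTuple)

variable (R : Type*) {M : Type*} [CommRing R] [AddCommGroup M] [Module R M]

/-- The bivector `e_{p+1} ∧ e_p`. -/
def adjacentBivector (e : ℕ → M) (p : ℕ) : ExteriorAlgebra R M :=
  ι R (e (p + 1)) * ι R (e p)

/-- The multivector `v 0 ∧ v 1 ∧ ⋯ ∧ v (n - 1)`. Unlike in `ExteriorAlgebra.ιMulti`, the vectors are
indexed by `ℕ`, so that splitting off factors involves no casts between `Fin` types. -/
def wedge (v : ℕ → M) (n : ℕ) : ExteriorAlgebra R M :=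
  ((List.range n).map fun q => ι R (v q)).prod

variable {R}

theorem wedge_succ (v : ℕ → M) (n : ℕ) :
    wedge R v (n + 1) = ι R (v 0) * wedge R (fun q => v (q + 1)) n :=
  List.prod_range_succ' _ _

theorem wedge_congr {v w : ℕ → M} {n : ℕ} (h : ∀ q < n, v q = w q) : wedge R v n = wedge R w n :=
  congrArg List.prod <| List.map_congr_left fun q hq => by rw [h q (List.mem_range.1 hq)]

theorem wedge_two_mul_add (v : ℕ → M) (s n : ℕ) :
    wedge R v (2 * s + n) =
      ((List.range s).map fun j => ι R (v (2 * j)) * ι R (v (2 * j + 1))).prod *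
        wedge R (fun q => v (2 * s + q)) n := by
  induction s generalizing v with
  | zero => simp
  | succ s ih =>
    rw [show 2 * (s + 1) + n = 2 * s + n + 1 + 1 by ring, wedge_succ, wedge_succ, ih,
      List.prod_range_succ', ← mul_assoc, ← mul_assoc]
    exact congrArg₂ (· * ·) rfl (wedge_congr fun q _ => congrArg v (by omega))

theorem wedge_eq_ιMulti (v : ℕ → M) (n : ℕ) : wedge R v n = ιMulti R n fun i : Fin n => v i := by
  rw [wedge, ιMulti_apply, List.ofFn_eq_map, ← List.map_coe_finRange_eq_range, List.map_map]
  rfl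

theorem ι_mul_ι_comm (x y : M) : ι R x * ι R y = -(ι R y * ι R x) :=
  eq_neg_of_add_eq_zero_left (ι_add_mul_swap x y)

theorem adjacentBivector_commute_ι (e : ℕ → M) (p : ℕ) (x : M) :
    Commute (adjacentBivector R e p) (ι R x) := by
  rw [Commute, SemiconjBy, adjacentBivector, mul_assoc, ι_mul_ι_comm (e p), mul_neg, ← mul_assoc,
    ι_mul_ι_comm _ x, neg_mul, neg_neg, mul_assoc]

theorem isGapped_adjacentBivector (e : ℕ → M) : IsGapped (adjacentBivector R e) where
  commute p q := (adjacentBivector_commute_ι e p _).mul_right (adjacentBivector_commute_ι e p _)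
  mul_self p := by
    nth_rewrite 2 [adjacentBivector]
    rw [← mul_assoc, (adjacentBivector_commute_ι e p _).eq, adjacentBivector, ← mul_assoc,
      ι_sq_zero, zero_mul, zero_mul]
  succ_mul p := by
    rw [adjacentBivector, adjacentBivector, mul_assoc, ← mul_assoc (ι R (e (p + 1))), ι_sq_zero,
      zero_mul, mul_zero]

section TorsionFree

variable [IsAddTorsionFree (ExteriorAlgebra R M)] {e : ℕ → M} {N : ℕ}

theorem sum_range_adjacentBivector_eq_zero (hrefl : ∀ p ≤ N, e (N - p) = e p) :
    ∑ p ∈ Finset.range N, adjacentBivector R e p = 0 := by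
  refine self_eq_neg.1 ?_
  rw [← Finset.sum_neg_distrib, ← Finset.sum_range_reflect]
  refine Finset.sum_congr rfl fun p hp => ?_
  have hp : p < N := Finset.mem_range.1 hp
  rw [adjacentBivector, show N - 1 - p + 1 = N - p by omega,
    show N - 1 - p = N - (p + 1) by omega, hrefl p hp.le, hrefl (p + 1) hp, ι_mul_ι_comm,
    adjacentBivector]

theorem gappedSum_adjacentBivector_add_period (hper : Function.Periodic e N)
    (hrefl : ∀ p ≤ N, e (N - p) = e p) (n s m : ℕ) :
    gappedSum (fun p => adjacentBivector R e (n + p)) s (m + N) =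
      gappedSum (fun p => adjacentBivector R e (n + p)) s m := by
  have hω : Function.Periodic (adjacentBivector R e) N := fun p => by
    rw [adjacentBivector, add_right_comm, hper, hper, adjacentBivector]
  refine ((isGapped_adjacentBivector e).shift n).gappedSum_add_period (fun t => ?_) s m
  simp only [← add_assoc, sum_range_add_of_periodic hω, sum_range_adjacentBivector_eq_zero hrefl]

end TorsionFree

theorem sum_wedge_eq_gappedSum_mul (e : ℕ → M) (s n m : ℕ) :
    ∑ b ∈ Finset.range (m + 1), ∑ c ∈ antidiagonalTuple s b,
      wedge R (fun q => e (tailSum c (q / 2) + (2 * s + n - 1 - q))) (2 * s + n) =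
    gappedSum (fun p => adjacentBivector R e (n + p)) s m * wedge R (fun q => e (n - 1 - q)) n := by
  rw [← sum_antidiagonalTuple_prod_eq_gappedSum, Finset.sum_mul]
  refine Finset.sum_congr rfl fun b _ => ?_
  rw [Finset.sum_mul]
  refine Finset.sum_congr rfl fun c _ => ?_
  rw [wedge_two_mul_add]
  congr 1
  · refine congrArg List.prod (List.map_congr_left fun j hj => ?_)
    have hj : j < s := List.mem_range.1 hj
    rw [adjacentBivector, show 2 * j / 2 = j by omega, show (2 * j + 1) / 2 = j by omega]
    congr 3 <;> omega
  · refine wedge_congr fun q _ => ?_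
    rw [tailSum_eq_zero c (by omega)]
    congr 1
    omega

theorem sum_wedge_eq_ι_mul_gappedSum_mul (e : ℕ → M) (s n m : ℕ) :
    ∑ c ∈ antidiagonalTuple (s + 1) m,
      wedge R (fun q => e (tailSum c ((q + 1) / 2) + (2 * s + n - q))) (2 * s + n + 1) =
    ι R (e (m + (2 * s + n))) * (gappedSum (fun p => adjacentBivector R e (n + p)) s m *
      wedge R (fun q => e (n - 1 - q)) n) := by
  rw [← sum_wedge_eq_gappedSum_mul, sum_antidiagonalTuple_succ, Finset.mul_sum]
  refine Finset.sum_congr rfl fun b hb => ?_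
  rw [Finset.mul_sum]
  refine Finset.sum_congr rfl fun c hc => ?_
  have total : m - b + ∑ i, c i = m := by
    rw [mem_antidiagonalTuple.1 hc, Nat.sub_add_cancel (Finset.mem_range_succ_iff.1 hb)]
  rw [wedge_succ, show (0 + 1) / 2 = 0 by rfl, tailSum_zero, Fin.sum_univ_succ]
  simp only [Fin.cons_zero, Fin.cons_succ, total, Nat.sub_zero]
  congr 1
  refine wedge_congr fun q _ => ?_
  rw [show (q + 1 + 1) / 2 = q / 2 + 1 by omega, tailSum_cons_succ, Nat.sub_sub, add_comm 1]

/-- The linear form on the exterior algebra of `R ^ r` that is the determinant in degree `r` and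
zero in the other degrees. -/
def detForm (R : Type*) [CommRing R] (r : ℕ) : ExteriorAlgebra R (Fin r → R) →ₗ[R] R :=
  liftAlternating (Pi.single r Matrix.detRowAlternating)

theorem detForm_wedge (r : ℕ) (v : ℕ → Fin r → R) :
    detForm R r (wedge R v r) = Matrix.det (Matrix.of fun i : Fin r => v i) := by
  rw [wedge_eq_ιMulti, detForm, liftAlternating_apply_ιMulti, Pi.single_eq_same]
  rfl

end Exterior

section Vandermonde

variable {R : Type*} [CommRing R]

theorem prod_filter_lt_sub_eq_det_vandermonde (r : ℕ) (x : ℕ → R) :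
    ∏ p ∈ (Finset.Icc 1 r ×ˢ Finset.Icc 1 r).filter (fun p => p.1 < p.2), (x p.2 - x p.1) =
      (Matrix.vandermonde fun i : Fin r => x (i + 1)).det := by
  rw [Matrix.det_vandermonde, Finset.prod_sigma']
  symm
  refine Finset.prod_bij (fun y _ => ((y.1 : ℕ) + 1, (y.2 : ℕ) + 1)) ?_ ?_ ?_ fun _ _ => rfl
  · rintro ⟨i, j⟩ h
    simp only [Finset.mem_sigma, Finset.mem_univ, Finset.mem_Ioi, true_and, Fin.lt_def] at h
    simp only [Finset.mem_filter, Finset.mem_product, Finset.mem_Icc]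
    omega
  · rintro ⟨i, j⟩ _ ⟨i', j'⟩ _ h
    simp only [Prod.mk.injEq, Nat.add_right_cancel_iff, Fin.val_inj] at h
    rw [h.1, h.2]
  · rintro ⟨i, j⟩ h
    simp only [Finset.mem_filter, Finset.mem_product, Finset.mem_Icc] at h
    refine ⟨⟨⟨i - 1, by omega⟩, ⟨j - 1, by omega⟩⟩, ?_, ?_⟩
    · simp only [Finset.mem_sigma, Finset.mem_univ, Finset.mem_Ioi, true_and, Fin.lt_def]
      omega
    · simp only [Prod.mk.injEq]
      omega

theorem det_vandermonde_neg (r : ℕ) (x : Fin r → R) :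
    (Matrix.vandermonde (-x)).det = (-1) ^ r.choose 2 * (Matrix.vandermonde x).det := by
  have h : Matrix.vandermonde (-x) =
      Matrix.of fun i j : Fin r => (-1) ^ (j : ℕ) * Matrix.vandermonde x i j := by
    ext i j
    simp only [Matrix.vandermonde_apply, Pi.neg_apply, Matrix.of_apply, neg_pow (x i)]
  rw [h, Matrix.det_mul_row, Finset.prod_pow_eq_pow_sum, Fin.sum_univ_eq_sum_range fun j => j,
    Finset.sum_range_id, Nat.choose_two_right]

end Vandermonde

section QuantumDimension

open Real
open ExteriorAlgebra (ι)

/-- The coordinate `x_i = cos (2π u_i(λ) / (h + k))`, in which the quantum dimension is a quotient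
of Vandermonde determinants. -/
noncomputable def cosCoord (r k : ℕ) (lam : ℕ → ℤ) (i : ℕ) : ℝ :=
  cos (2 * π * uCoord r lam i / (2 * (r : ℝ) - 2 + (k : ℝ)))

/-- The row `(1, x, …, x ^ (r - 1))` of a Vandermonde matrix at `x = cos (2π p / N)`. -/
noncomputable def cosRow (N r p : ℕ) : Fin r → ℝ := fun j => cos (2 * π * p / N) ^ (j : ℕ)

theorem cosRow_periodic {N : ℕ} (hN : N ≠ 0) (r : ℕ) : Function.Periodic (cosRow N r) N := by
  intro p
  have hN' : (N : ℝ) ≠ 0 := Nat.cast_ne_zero.2 hN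
  funext j
  rw [cosRow, cosRow, ← cos_add_two_pi (2 * π * p / N), Nat.cast_add]
  congr 2
  field_simp

theorem cosRow_sub {N : ℕ} (hN : N ≠ 0) (r : ℕ) {p : ℕ} (hp : p ≤ N) :
    cosRow N r (N - p) = cosRow N r p := by
  have hN' : (N : ℝ) ≠ 0 := Nat.cast_ne_zero.2 hN
  funext j
  rw [cosRow, cosRow, ← cos_two_pi_sub (2 * π * p / N), Nat.cast_sub hp]
  congr 2
  field_simp

theorem cast_coxeter_add {r : ℕ} (k : ℕ) (hr : 1 ≤ r) :
    ((k + 2 * r - 2 : ℕ) : ℝ) = 2 * (r : ℝ) - 2 + (k : ℝ) := by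
  rw [Nat.cast_sub (by omega)]
  push_cast
  ring

theorem sin_sub_mul_sin_add_s17 (u v N : ℝ) :
    sin (π * (u - v) / N) * sin (π * (u + v) / N) =
      (cos (2 * π * v / N) - cos (2 * π * u / N)) / 2 := by
  rw [cos_sub_cos, show (2 * π * v / N + 2 * π * u / N) / 2 = π * (u + v) / N by ring,
    show (2 * π * v / N - 2 * π * u / N) / 2 = -(π * (u - v) / N) by ring, sin_neg]
  ring

theorem uCoord_zero (r i : ℕ) : uCoord r 0 i = (r : ℝ) - i := by
  rw [uCoord]
  split_ifs with h
  · simp [h]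
  · simp

/-- The Vandermonde determinant in the coordinates `x_1, …, x_r` of `λ`: up to a constant factor,
the numerator of the Weyl character formula and, at `λ = 0`, its denominator. -/
noncomputable def cosVandermonde (r k : ℕ) (lam : ℕ → ℤ) : ℝ :=
  (Matrix.vandermonde fun i : Fin r => cosCoord r k lam (i + 1)).det

theorem qdimD_eq_cosVandermonde_div (r k : ℕ) (lam : ℕ → ℤ) :
    qdimD r k lam = cosVandermonde r k lam / cosVandermonde r k 0 := by
  rw [cosVandermonde, cosVandermonde, ← prod_filter_lt_sub_eq_det_vandermonde,
    ← prod_filter_lt_sub_eq_det_vandermonde, ← Finset.prod_div_distrib, qdimD]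
  refine Finset.prod_congr rfl fun p _ => ?_
  have hden : sin (π * ((p.2 : ℝ) - p.1) / (2 * (r : ℝ) - 2 + k)) *
      sin (π * (2 * (r : ℝ) - p.1 - p.2) / (2 * (r : ℝ) - 2 + k)) =
        (cosCoord r k 0 p.2 - cosCoord r k 0 p.1) / 2 := by
    rw [cosCoord, cosCoord, ← sin_sub_mul_sin_add_s17, uCoord_zero, uCoord_zero,
      sub_sub_sub_cancel_left, show (r : ℝ) - p.1 + (r - p.2) = 2 * r - p.1 - p.2 by ring]
  rw [hden, sin_sub_mul_sin_add_s17, div_div_div_cancel_right₀ two_ne_zero]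
  rfl

theorem cosVandermonde_of_eq_neg {r k : ℕ} {lam mu : ℕ → ℤ}
    (h : ∀ i, cosCoord r k lam i = -cosCoord r k mu i) :
    cosVandermonde r k lam = (-1) ^ r.choose 2 * cosVandermonde r k mu := by
  rw [cosVandermonde, cosVandermonde, ← det_vandermonde_neg]
  simp only [h]
  rfl

theorem qdimD_eq_detForm_div {r : ℕ} (k : ℕ) (hr : 1 ≤ r) {lam : ℕ → ℤ} {u : ℕ → ℕ}
    (hu : ∀ q < r, uCoord r lam (q + 1) = u q) :
    qdimD r k lam = detForm ℝ r (wedge ℝ (fun q => cosRow (k + 2 * r - 2) r (u q)) r) /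
      cosVandermonde r k 0 := by
  rw [qdimD_eq_cosVandermonde_div, cosVandermonde, detForm_wedge]
  congr 2
  ext i j
  rw [Matrix.vandermonde_apply, cosCoord, hu i i.2, ← cast_coxeter_add k hr, Matrix.of_apply,
    cosRow]

theorem qdimD_zero {r : ℕ} (k : ℕ) (hr : 2 ≤ r) : qdimD r k 0 = 1 := by
  rw [qdimD_eq_cosVandermonde_div]
  refine div_self (Matrix.det_vandermonde_ne_zero_iff.2 fun i j hij => ?_)
  have hr' : (2 : ℝ) ≤ r := by exact_mod_cast hr
  have hH : 0 < 2 * (r : ℝ) - 2 + k := by linarith [k.cast_nonneg (α := ℝ)]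
  have angle_mem (i : Fin r) :
      2 * π * uCoord r 0 (i + 1) / (2 * (r : ℝ) - 2 + k) ∈ Set.Icc 0 π := by
    have hi : (i : ℝ) + 1 ≤ r := by exact_mod_cast i.2
    rw [uCoord_zero, Nat.cast_succ, Set.mem_Icc, div_le_iff₀ hH]
    refine ⟨div_nonneg (mul_nonneg two_pi_pos.le (by linarith)) hH.le, ?_⟩
    nlinarith [pi_pos, k.cast_nonneg (α := ℝ), (i : ℕ).cast_nonneg (α := ℝ)]
  have h := injOn_cos (angle_mem i) (angle_mem j) hij
  rw [div_left_inj' hH.ne', mul_right_inj' two_pi_pos.ne', uCoord_zero, uCoord_zero] at h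
  exact Fin.ext (by simpa using h)

theorem cosCoord_spin {r a : ℕ} (k m : ℕ) (hr : 2 ≤ r) (ha : a = r - 1 ∨ a = r) (i : ℕ) :
    cosCoord r k (fun j => if j = a then (m : ℤ) else 0) i =
      cos (2 * π * ((m : ℝ) / 2 + (r - i)) / (2 * (r : ℝ) - 2 + (k : ℝ))) := by
  have hsum : ∑ j ∈ Finset.Icc i (r - 2), ((if j = a then (m : ℤ) else 0 : ℤ) : ℝ) = 0 := by
    refine Finset.sum_eq_zero fun j hj => ?_
    rw [Finset.mem_Icc] at hj
    rw [if_neg (by omega), Int.cast_zero]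
  rw [cosCoord, uCoord, hsum]
  by_cases hi : i = r
  · rw [if_pos hi, hi, sub_self, add_zero]
    rcases ha with ha | ha
    · rw [if_neg (by omega), if_pos ha.symm, ← cos_neg]
      congr 1
      push_cast
      ring
    · rw [if_pos ha.symm, if_neg (by omega)]
      simp
  · have hlast : ((if r - 1 = a then (m : ℤ) else 0 : ℤ) : ℝ) +
        ((if r = a then (m : ℤ) else 0 : ℤ) : ℝ) = m := by
      rcases ha with ha | ha
      · rw [if_pos ha.symm, if_neg (by omega), Int.cast_zero, add_zero, Int.cast_natCast]
      · rw [if_neg (by omega), if_pos ha.symm, Int.cast_zero, zero_add, Int.cast_natCast]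
    rw [if_neg hi, hlast, zero_add]

theorem qdimD_spin_add_period {r a : ℕ} (k m : ℕ) (hr : 2 ≤ r) (ha : a = r - 1 ∨ a = r) :
    qdimD r k (fun j => if j = a then ((m + (k + 2 * r - 2) : ℕ) : ℤ) else 0) =
      (-1) ^ r.choose 2 * qdimD r k (fun j => if j = a then (m : ℤ) else 0) := by
  have half_turn (i : ℕ) :
      cosCoord r k (fun j => if j = a then ((m + (k + 2 * r - 2) : ℕ) : ℤ) else 0) i =
        -cosCoord r k (fun j => if j = a then (m : ℤ) else 0) i := by
    have hN : ((k + 2 * r - 2 : ℕ) : ℝ) ≠ 0 := Nat.cast_ne_zero.2 (by omega)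
    rw [cosCoord_spin k _ hr ha, cosCoord_spin k _ hr ha, ← cos_add_pi,
      ← cast_coxeter_add k (by omega), Nat.cast_add m]
    congr 1
    field_simp
    ring
  rw [qdimD_eq_cosVandermonde_div, qdimD_eq_cosVandermonde_div, cosVandermonde_of_eq_neg half_turn,
    mul_div_assoc]

theorem uCoord_of_spin_eq_zero {r : ℕ} {lam : ℕ → ℤ} (h₁ : lam (r - 1) = 0) (h₀ : lam r = 0)
    (hr : 1 ≤ r) (i : ℕ) :
    uCoord r lam i = ((∑ j ∈ Finset.Icc i (r - 2), lam j : ℤ) : ℝ) + ((r : ℝ) - i) := by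
  rw [uCoord, h₁, h₀]
  split_ifs with h
  · rw [h, Finset.Icc_eq_empty (by omega)]
    simp
  · push_cast
    ring

theorem uCoord_alternating {r s d : ℕ} (hs : 2 * s + d ≤ r) (c : Fin s → ℕ) {q : ℕ} (hq : q < r) :
    uCoord r (fun j => ∑ i : Fin s, if j = 2 * (i : ℕ) + d then (c i : ℤ) else 0) (q + 1) =
      ((tailSum c ((q + 2 - d) / 2) + (r - 1 - q) : ℕ) : ℝ) := by
  have hsum : ∑ j ∈ Finset.Icc (q + 1) (r - 2), ∑ i : Fin s,
      (if j = 2 * (i : ℕ) + d then (c i : ℤ) else 0) = (tailSum c ((q + 2 - d) / 2) : ℤ) := by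
    rw [Finset.sum_comm, tailSum, Nat.cast_sum]
    refine Finset.sum_congr rfl fun i _ => ?_
    rw [Finset.sum_ite_eq', Nat.cast_ite, Nat.cast_zero]
    refine if_congr ?_ rfl rfl
    rw [Finset.mem_Icc]
    omega
  rw [uCoord_of_spin_eq_zero (Finset.sum_eq_zero fun i _ => if_neg (by omega))
    (Finset.sum_eq_zero fun i _ => if_neg (by omega)) (by omega), hsum,
    show r - 1 - q = r - (q + 1) by omega, Nat.cast_add (tailSum _ _), Nat.cast_sub (by omega)]
  push_cast
  ring

theorem zD_even {r s n : ℕ} (k m : ℕ) (hr : r = 2 * s + n) (hn : 2 ≤ n) :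
    zD r k (2 * s) m =
      detForm ℝ r
        (gappedSum (fun p => adjacentBivector ℝ (cosRow (k + 2 * r - 2) r) (n + p)) s m *
          wedge ℝ (fun q => cosRow (k + 2 * r - 2) r (n - 1 - q)) n) / cosVandermonde r k 0 := by
  subst hr
  rw [← sum_wedge_eq_gappedSum_mul, ← sum_filter_sum_le, map_sum, Finset.sum_div, zD,
    if_neg (by omega), if_neg (by omega), Nat.mul_div_cancel_left s two_pos]
  exact Finset.sum_congr rfl fun c _ => qdimD_eq_detForm_div k (by omega) fun q hq =>
    uCoord_alternating (by omega) c hq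

theorem zD_odd {r s n : ℕ} (k m : ℕ) (hr : r = 2 * s + n + 1) (hn : 2 ≤ n) :
    zD r k (2 * s + 1) m =
      detForm ℝ r
        (ι ℝ (cosRow (k + 2 * r - 2) r (m + (2 * s + n))) *
          (gappedSum (fun p => adjacentBivector ℝ (cosRow (k + 2 * r - 2) r) (n + p)) s m *
            wedge ℝ (fun q => cosRow (k + 2 * r - 2) r (n - 1 - q)) n)) /
        cosVandermonde r k 0 := by
  subst hr
  rw [← sum_wedge_eq_ι_mul_gappedSum_mul, ← filter_sum_eq_antidiagonalTuple, map_sum,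
    Finset.sum_div, zD, if_neg (by omega), if_pos (by omega),
    show (2 * s + 1 + 1) / 2 = s + 1 by omega]
  exact Finset.sum_congr rfl fun c _ => qdimD_eq_detForm_div k (by omega) fun q hq =>
    uCoord_alternating (by omega) c hq

theorem zD_add_period {r a : ℕ} (k m : ℕ) (ha : a + 2 ≤ r) :
    zD r k a (m + (k + 2 * r - 2)) = zD r k a m := by
  have : IsAddTorsionFree (ExteriorAlgebra ℝ (Fin r → ℝ)) := .of_isTorsionFree ℝ _
  have hN : k + 2 * r - 2 ≠ 0 := by omega
  have hper := cosRow_periodic hN r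
  have hgap := gappedSum_adjacentBivector_add_period (R := ℝ) hper fun p => cosRow_sub hN r
  obtain ⟨n, hn⟩ := Nat.exists_eq_add_of_le (Nat.le_of_add_right_le ha)
  rcases Nat.even_or_odd' a with ⟨s, rfl | rfl⟩
  · rw [zD_even k _ hn (by omega), zD_even k _ hn (by omega), hgap]
  · have hn' : r = 2 * s + n + 1 := by omega
    rw [zD_odd k _ hn' (by omega), zD_odd k _ hn' (by omega), hgap, add_right_comm m, hper]

theorem zD_spin_add_period {r a : ℕ} (k m : ℕ) (hr : 2 ≤ r) (ha : a = r - 1 ∨ a = r) :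
    zD r k a (m + (k + 2 * r - 2)) = (-1) ^ r.choose 2 * zD r k a m := by
  rw [zD, zD, if_pos ha, if_pos ha, qdimD_spin_add_period k m hr ha]

theorem zD_zero {r : ℕ} (k a : ℕ) (hr : 2 ≤ r) : zD r k a 0 = 1 := by
  have qdimD_eq_one {lam : ℕ → ℤ} (h : ∀ j, lam j = 0) : qdimD r k lam = 1 := by
    rw [show lam = 0 from funext h, qdimD_zero k hr]
  rw [zD]
  split_ifs
  · exact qdimD_eq_one fun j => by simp
  · simp [Finset.filter_true_of_mem, qdimD_eq_one]
  · simp [Finset.filter_true_of_mem, qdimD_eq_one]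

end QuantumDimension

theorem stmt17_general (r k : ℕ) (hr : 2 ≤ r) :
    (∀ a ≤ r - 2, zD r k a (k + 2 * r - 2) = 1) ∧
    ∀ a, a = r - 1 ∨ a = r → zD r k a (k + 2 * r - 2) = (-1) ^ r.choose 2 := by
  refine ⟨fun a ha => ?_, fun a ha => ?_⟩
  · rw [← zero_add (k + 2 * r - 2), zD_add_period k 0 (by omega), zD_zero k a hr]
  · rw [← zero_add (k + 2 * r - 2), zD_spin_add_period k 0 hr ha, zD_zero k a hr, mul_one]

/-- The quantum dimension solution of type `D_r` satisfies `z^{(a)}_{k+h} = 1` for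
`1 ≤ a ≤ r-2`, and `z^{(r-1)}_{k+h} = z^{(r)}_{k+h} = ±1`, where `h = 2r - 2`. -/
theorem stmt17 (r k : ℕ) (hr : 4 ≤ r) (hk : 1 ≤ k) :
    (∀ a : ℕ, 1 ≤ a → a ≤ r - 2 → zD r k a (k + 2 * r - 2) = 1) ∧
    zD r k (r - 1) (k + 2 * r - 2) = zD r k r (k + 2 * r - 2) ∧
    (zD r k (r - 1) (k + 2 * r - 2) = 1 ∨ zD r k (r - 1) (k + 2 * r - 2) = -1) := by
  obtain ⟨h, hspin⟩ := stmt17_general r k (by omega)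
  rw [hspin _ (.inl rfl), hspin _ (.inr rfl)]
  exact ⟨fun a _ => h a, rfl, neg_one_pow_eq_or ℝ _⟩
end
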